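/- arXiv:2506.24067 — 3 statements merged into one kernel-verified Lean document; each statement's English description precedes it below -/
import Mathlib

section
/- Let N, m ≥ 1 be integers and let Ω ⊆ ℝ × ℝ^m be an open set such that for every z ∈ ℝ^m the slice Ω_z := {t ∈ ℝ : (t, z) ∈ Ω}, if nonempty, is an interval containing 0. Let A : Ω → Matrix (Fin N) (Fin N) ℂ be real-analytic on Ω. Suppose W : Ω → Matrix (Fin N) (Fin N) ℂ satisfies: (i) for every (t, z) ∈ Ω the map s ↦ W(s, z) is differentiable at t with derivative −A(t, z) · W(t, z); and (ii) W(0, z) = Id for every z with (0, z) ∈ Ω. Then W is real-analytic on Ω. -/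
open Matrix
attribute [local instance] Matrix.normedAddCommGroup Matrix.normedSpace

section helpers
variable {K : Type*} [TopologicalSpace K] [CompactSpace K]
  {X G E Z : Type*} [NormedAddCommGroup X] [NormedSpace ℝ X] [NormedAddCommGroup G] [NormedSpace ℝ G]
  [NormedAddCommGroup E] [NormedSpace ℝ E] [NormedAddCommGroup Z] [NormedSpace ℝ Z]

theorem clm_comp_an (L : X →L[ℝ] G) (f : Z → X) (z : Z) (hf : AnalyticAt ℝ f z) :
    AnalyticAt ℝ (fun y => L (f y)) z :=
  (L.analyticAt _).fun_comp hf

noncomputable def nemMulti (n : ℕ) (p : ContinuousMultilinearMap ℝ (fun _ : Fin n => X) G) :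
    ContinuousMultilinearMap ℝ (fun _ : Fin n => C(K, X)) C(K, G) :=
  MultilinearMap.mkContinuous
    { toFun := fun u => ⟨fun s => p (fun i => u i s), by fun_prop⟩
      map_update_add' := by
        intro _ u i x y
        ext s
        have h : ∀ w : C(K, X), (fun j => (Function.update u i w) j s)
            = Function.update (fun j => u j s) i (w s) := by
          intro w; ext j; by_cases hj : j = i
          · subst hj; simp
          · simp [hj]
        simp [h]
      map_update_smul' := by
        intro _ u i c x
        ext s
        have h : ∀ w : C(K, X), (fun j => (Function.update u i w) j s)
            = Function.update (fun j => u j s) i (w s) := by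
          intro w; ext j; by_cases hj : j = i
          · subst hj; simp
          · simp [hj]
        simp [h] } ‖p‖ (by
      intro u
      rw [ContinuousMap.norm_le _ (by positivity)]
      intro s
      refine (p.le_opNorm _).trans ?_
      gcongr with i
      exact (u i).norm_coe_le_norm s)

theorem nemMulti_norm (n : ℕ) (p : ContinuousMultilinearMap ℝ (fun _ : Fin n => X) G) :
    ‖nemMulti (K := K) n p‖ ≤ ‖p‖ :=
  MultilinearMap.mkContinuous_norm_le _ (norm_nonneg _) _

theorem nemytskii [CompleteSpace G] (F : X → G) (x0 : X) (hF : AnalyticAt ℝ F x0) :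
    ∃ Φ : C(K, X) → C(K, G), AnalyticAt ℝ Φ (ContinuousMap.const K x0) ∧
      ∀ᶠ u in nhds (ContinuousMap.const K x0), ∀ s, Φ u s = F (u s) := by
  obtain ⟨p, r, hp⟩ := hF
  let P : FormalMultilinearSeries ℝ C(K, X) C(K, G) := fun n => nemMulti n (p n)
  have hrad : p.radius ≤ P.radius :=
    FormalMultilinearSeries.radius_le_of_le (fun n => nemMulti_norm n (p n))
  have hPpos : 0 < P.radius := hp.r_pos.trans_le (hp.r_le.trans hrad)
  have hP := P.hasFPowerSeriesOnBall hPpos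
  refine ⟨fun u => P.sum (u - ContinuousMap.const K x0), ?_, ?_⟩
  · have := hP.comp_sub (ContinuousMap.const K x0)
    rw [zero_add] at this
    exact this.analyticAt
  · have hb : Metric.eball (ContinuousMap.const K x0) r ∈ nhds (ContinuousMap.const K x0) :=
      Metric.eball_mem_nhds _ hp.r_pos
    filter_upwards [hb] with u hu s
    have hu' : u - ContinuousMap.const K x0 ∈ Metric.eball (0 : C(K, X)) P.radius := by
      have : u - ContinuousMap.const K x0 ∈ Metric.eball (0 : C(K, X)) r := by
        simpa [edist_eq_enorm_sub] using hu
      exact Metric.eball_subset_eball (hp.r_le.trans hrad) this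
    have h1 := P.hasSum hu'
    have h2 := h1.mapL (ContinuousMap.evalCLM ℝ s)
    have h3 : u s - x0 ∈ Metric.eball (0 : X) r := by
      have h4 : ‖u s - x0‖ₑ ≤ ‖u - ContinuousMap.const K x0‖ₑ := by
        rw [enorm_le_iff_norm_le]
        exact (u - ContinuousMap.const K x0).norm_coe_le_norm s
      have : ‖u - ContinuousMap.const K x0‖ₑ < r := by
        simpa [edist_eq_enorm_sub] using hu
      simpa using h4.trans_lt this
    have h4 := hp.hasSum h3
    rw [add_sub_cancel] at h4
    exact h2.unique h4

noncomputable def ptApply : C(K, E →L[ℝ] E) →L[ℝ] C(K, E) →L[ℝ] C(K, E) :=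
  LinearMap.mkContinuous₂
    (LinearMap.mk₂ ℝ (fun (B : C(K, E →L[ℝ] E)) (f : C(K, E)) => (⟨fun s => B s (f s), by fun_prop⟩ : C(K, E)))
      (by intros; ext; simp) (by intros; ext; simp) (by intros; ext; simp) (by intros; ext; simp))
    1 (by
      intro B f
      rw [ContinuousMap.norm_le _ (by positivity)]
      intro s
      simp only [LinearMap.mk₂_apply, ContinuousMap.coe_mk, one_mul]
      refine ((B s).le_opNorm _).trans ?_
      gcongr
      · exact B.norm_coe_le_norm s
      · exact f.norm_coe_le_norm s)

theorem ptApply_apply (B : C(K, E →L[ℝ] E)) (f : C(K, E)) (s : K) :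
    ptApply B f s = B s (f s) := rfl

local notation "II" => Set.Icc (0:ℝ) 1

noncomputable def extI (f : C(II, E)) : ℝ → E := Set.IccExtend zero_le_one f

theorem extI_cont (f : C(II, E)) : Continuous (extI f) := f.continuous.Icc_extend'

noncomputable def volt : C(II, E) →L[ℝ] C(II, E) :=
  LinearMap.mkContinuous
    { toFun := fun f => ⟨fun s => ∫ r in (0:ℝ)..s, extI f r, by
        have := intervalIntegral.continuous_primitive
          (fun a b => (extI_cont f).intervalIntegrable (μ := MeasureTheory.volume) a b) 0
        exact this.comp continuous_subtype_val⟩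
      map_add' := by
        intro f g; ext s
        exact intervalIntegral.integral_add ((extI_cont f).intervalIntegrable _ _)
          ((extI_cont g).intervalIntegrable _ _)
      map_smul' := by
        intro c f; ext s
        exact intervalIntegral.integral_smul c (extI f) } 1 (by
      intro f
      rw [ContinuousMap.norm_le _ (by positivity)]
      intro s
      have := intervalIntegral.norm_integral_le_of_norm_le_const (a := 0) (b := (s:ℝ))
        (f := extI f) (C := ‖f‖) (fun x _ => f.norm_coe_le_norm _)
      refine this.trans ?_
      rw [sub_zero, abs_of_nonneg s.2.1, one_mul]
      exact mul_le_of_le_one_right (norm_nonneg _) s.2.2)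

theorem volt_apply (f : C(II, E)) (s : II) : volt f s = ∫ r in (0:ℝ)..s, extI f r := rfl

noncomputable def segm [FiniteDimensional ℝ Z] : (ℝ × ℝ × Z) →L[ℝ] C(II, ℝ × Z) :=
  LinearMap.toContinuousLinearMap
    { toFun := fun y => ⟨fun s => (y.1 + s * (y.2.1 - y.1), y.2.2), by fun_prop⟩
      map_add' := by
        intro x y; ext s <;> simp; ring
      map_smul' := by
        intro x y; ext s <;> simp; ring }

theorem segm_apply [FiniteDimensional ℝ Z] (y : ℝ × ℝ × Z) (s : II) :
    segm y s = (y.1 + s * (y.2.1 - y.1), y.2.2) := rfl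

theorem local_prop [FiniteDimensional ℝ Z] [CompleteSpace E] (Ω : Set (ℝ × Z)) (hΩ : IsOpen Ω)
    (A : ℝ × Z → E →L[ℝ] E) (W : ℝ × Z → E) (hA : AnalyticOnNhd ℝ A Ω)
    (hW : ∀ x ∈ Ω, HasDerivAt (fun s : ℝ => W (s, x.2)) (A x (W x)) x.1)
    (t1 : ℝ) (z0 : Z) (h0 : (t1, z0) ∈ Ω) :
    ∃ R : ℝ × ℝ × Z → E →L[ℝ] E, AnalyticAt ℝ R (t1, t1, z0) ∧
      ∀ᶠ y in nhds (t1, t1, z0), AnalyticAt ℝ R y ∧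
        W (y.2.1, y.2.2) = R y (W (y.1, y.2.2)) := by
  obtain ⟨Φ, hΦ, hΦe⟩ := nemytskii (K := II) A (t1, z0) (hA _ h0)
  have hs0 : segm (t1, t1, z0) = ContinuousMap.const II (t1, z0) := by
    ext s <;> simp [segm_apply]
  let B : ℝ × ℝ × Z → C(II, E →L[ℝ] E) := fun y => (y.2.1 - y.1) • Φ (segm y)
  have hB0 : B (t1, t1, z0) = 0 := by simp [B]
  have hBa : AnalyticAt ℝ B (t1, t1, z0) := by
    have h1 : AnalyticAt ℝ (fun y => Φ (segm y)) (t1, t1, z0) :=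
      AnalyticAt.fun_comp (by rw [hs0]; exact hΦ) (ContinuousLinearMap.analyticAt (segm (Z := Z)) (t1, t1, z0))
    have h2 : AnalyticAt ℝ (fun y : ℝ × ℝ × Z => y.2.1 - y.1) (t1, t1, z0) :=
      (analyticAt_fst.fun_comp analyticAt_snd).sub analyticAt_fst
    exact h2.smul h1
  let M : ℝ × ℝ × Z → (C(II, E) →L[ℝ] C(II, E)) := fun y => 1 - volt.comp (ptApply (B y))
  have hM0 : M (t1, t1, z0) = 1 := by simp [M, hB0]
  have hMa : AnalyticAt ℝ M (t1, t1, z0) := by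
    have h1 : AnalyticAt ℝ (fun y => ptApply (B y)) (t1, t1, z0) :=
by
      have h := clm_comp_an (G := C(II, E) →L[ℝ] C(II, E)) (ptApply (K := II) (E := E)) B _ hBa
      exact h
    have h2 : AnalyticAt ℝ (fun y => volt.comp (ptApply (B y))) (t1, t1, z0) :=
      clm_comp_an (G := C(II, E) →L[ℝ] C(II, E))
        (ContinuousLinearMap.compL ℝ C(II, E) C(II, E) C(II, E) volt)
        (fun y => ptApply (B y)) _ h1
    exact analyticAt_const.sub h2
  let R : ℝ × ℝ × Z → E →L[ℝ] E := fun y =>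
    (ContinuousMap.evalCLM ℝ (⟨1, by simp⟩ : II)).comp
      ((Ring.inverse (M y)).comp (ContinuousLinearMap.const ℝ II))
  have hRa : AnalyticAt ℝ R (t1, t1, z0) := by
    have h1 : AnalyticAt ℝ (fun y => Ring.inverse (M y)) (t1, t1, z0) := by
      refine AnalyticAt.fun_comp (g := Ring.inverse) ?_ hMa
      rw [hM0]
      exact analyticAt_inverse (𝕜 := ℝ) (A := C(II, E) →L[ℝ] C(II, E)) 1
    have h2 : AnalyticAt ℝ (fun y => (Ring.inverse (M y)).comp
        (ContinuousLinearMap.const ℝ II : E →L[ℝ] C(II, E))) (t1, t1, z0) :=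
by
      have h := clm_comp_an (G := E →L[ℝ] C(II, E)) ((ContinuousLinearMap.compL ℝ E C(II, E) C(II, E)).flip
          (ContinuousLinearMap.const ℝ II)) (fun y => Ring.inverse (M y)) _ h1
      exact h
    exact ((ContinuousLinearMap.compL ℝ E C(II, E) E
      (ContinuousMap.evalCLM ℝ (⟨1, by simp⟩ : II))).analyticAt _).fun_comp h2
  refine ⟨R, hRa, ?_⟩
  have hsegt : Filter.Tendsto segm (nhds (t1, t1, z0))
      (nhds (ContinuousMap.const II ((t1, z0) : ℝ × Z))) := by
    rw [← hs0]; exact segm.continuous.tendsto _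
  have e1 := hsegt.eventually hΦe
  have e2 : ∀ᶠ y in nhds (t1, t1, z0), ∀ s : II, segm y s ∈ Ω := by
    obtain ⟨ε, hε, hball⟩ := Metric.isOpen_iff.1 hΩ _ h0
    filter_upwards [hsegt.eventually (Metric.ball_mem_nhds _ hε)] with y hy s
    exact hball ((ContinuousMap.dist_apply_le_dist s).trans_lt hy)
  have e3 : ∀ᶠ y in nhds (t1, t1, z0), IsUnit (M y) := by
    refine hMa.continuousAt.eventually ?_
    rw [hM0]
    exact (Units.isOpen (R := C(II, E) →L[ℝ] C(II, E))).mem_nhds isUnit_one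
  filter_upwards [e1, e2, e3, hRa.eventually_analyticAt] with y h1 h2 h3 h4
  refine ⟨h4, ?_⟩
  obtain ⟨τ, t, z⟩ := y
  have hd : ∀ s ∈ II, HasDerivAt (fun s : ℝ => W (τ + s * (t - τ), z))
      ((t - τ) • A (τ + s * (t - τ), z) (W (τ + s * (t - τ), z))) s := by
    intro s hs
    have hin : (τ + s * (t - τ), z) ∈ Ω := h2 ⟨s, hs⟩
    have ha : HasDerivAt (fun s : ℝ => τ + s * (t - τ)) (t - τ) s := by
      simpa using ((hasDerivAt_id s).mul_const (t - τ)).const_add τ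
    exact HasDerivAt.scomp s (hW _ hin) ha
  let f : C(II, E) := ⟨fun s => W (τ + s * (t - τ), z), by
    have : ContinuousOn (fun s : ℝ => W (τ + s * (t - τ), z)) II :=
      fun s hs => (hd s hs).continuousAt.continuousWithinAt
    exact continuousOn_iff_continuous_domRestrict.1 this⟩
  have key : M (τ, t, z) f = ContinuousLinearMap.const ℝ II (W (τ, z)) := by
    ext s
    have hi : ∫ r in (0:ℝ)..s, extI (ptApply (B (τ, t, z)) f) r
        = W (τ + s * (t - τ), z) - W (τ + (0:ℝ) * (t - τ), z) := by
      refine intervalIntegral.integral_eq_sub_of_hasDerivAt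
        (f := fun s : ℝ => W (τ + s * (t - τ), z)) ?_ ((extI_cont _).intervalIntegrable _ _)
      intro r hr
      rw [Set.uIcc_of_le s.2.1] at hr
      have hr' : r ∈ II := ⟨hr.1, hr.2.trans s.2.2⟩
      have : extI (ptApply (B (τ, t, z)) f) r
          = (t - τ) • A (τ + r * (t - τ), z) (W (τ + r * (t - τ), z)) := by
        have h5 := h1 ⟨r, hr'⟩
        rw [segm_apply] at h5
        simp only at h5
        rw [extI, Set.IccExtend_of_mem _ _ hr', ptApply_apply]
        simp only [B, ContinuousMap.smul_apply, h5]
        rfl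
      rw [this]
      exact hd r hr'
    have : M (τ, t, z) f s = f s - volt (ptApply (B (τ, t, z)) f) s := rfl
    have hf : f s = W (τ + s * (t - τ), z) := rfl
    rw [this, volt_apply, hi, hf]
    simp
  have key2 : f = Ring.inverse (M (τ, t, z)) (ContinuousLinearMap.const ℝ II (W (τ, z))) := by
    rw [← key, ← mul_apply_eq_comp, Ring.inverse_mul_cancel _ h3]
    rfl
  have : f ⟨1, by simp⟩ = R (τ, t, z) (W (τ, z)) := by
    rw [key2]; rfl
  rw [← this]
  have hf : f ⟨1, by simp⟩ = W (τ + (1:ℝ) * (t - τ), z) := rfl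
  rw [hf]
  simp

theorem global_prop [FiniteDimensional ℝ Z] [CompleteSpace E] (Ω : Set (ℝ × Z)) (hΩ : IsOpen Ω)
    (hslice : ∀ z : Z, {t : ℝ | (t, z) ∈ Ω}.Nonempty →
      (0, z) ∈ Ω ∧ Set.OrdConnected {t : ℝ | (t, z) ∈ Ω})
    (A : ℝ × Z → E →L[ℝ] E) (W : ℝ × Z → E) (hA : AnalyticOnNhd ℝ A Ω)
    (hW : ∀ x ∈ Ω, HasDerivAt (fun s : ℝ => W (s, x.2)) (A x (W x)) x.1) (w0 : E)
    (hW0 : ∀ z : Z, (0, z) ∈ Ω → W (0, z) = w0) : AnalyticOnNhd ℝ W Ω := by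
  rintro ⟨t0, z0⟩ h0
  obtain ⟨h00, hord⟩ := hslice z0 ⟨t0, h0⟩
  -- one-variable analyticity
  let P : ℝ → Prop := fun t => AnalyticAt ℝ (fun z => W (t, z)) z0
  have step : ∀ t1, (t1, z0) ∈ Ω → ∀ᶠ q : ℝ × ℝ in nhds (t1, t1), P q.1 →
      AnalyticAt ℝ W (q.2, z0) := by
    intro t1 h1
    obtain ⟨R, -, hR⟩ := local_prop Ω hΩ A W hA hW t1 z0 h1
    have hc : Filter.Tendsto (fun q : ℝ × ℝ => (q.1, q.2, z0)) (nhds (t1, t1))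
        (nhds (t1, t1, z0)) := by
      have : Continuous (fun q : ℝ × ℝ => (q.1, q.2, z0)) := by fun_prop
      exact this.tendsto (t1, t1)
    filter_upwards [hc.eventually hR.eventually_nhds] with q hq hP
    have hev : ∀ᶠ x : ℝ × Z in nhds (q.2, z0), R (q.1, x.1, x.2) (W (q.1, x.2)) = W x := by
      have : Continuous (fun x : ℝ × Z => (q.1, x.1, x.2)) := by fun_prop
      have := (this.tendsto (q.2, z0)).eventually hq
      filter_upwards [this] with x hx using hx.2.symm
    refine AnalyticAt.congr ?_ hev
    have hRa : AnalyticAt ℝ (fun x : ℝ × Z => R (q.1, x.1, x.2)) (q.2, z0) :=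
      AnalyticAt.fun_comp (g := R) (f := fun x : ℝ × Z => (q.1, x.1, x.2))
        hq.self_of_nhds.1 (analyticAt_const.prod (analyticAt_fst.prod analyticAt_snd))
    have hWa : AnalyticAt ℝ (fun x : ℝ × Z => W (q.1, x.2)) (q.2, z0) :=
      AnalyticAt.fun_comp (g := fun z => W (q.1, z)) (f := fun x : ℝ × Z => x.2) hP analyticAt_snd
    exact AnalyticAt.fun_comp (g := fun v : (E →L[ℝ] E) × E => v.1 v.2)
      (f := fun x : ℝ × Z => (R (q.1, x.1, x.2), W (q.1, x.2)))
      (ContinuousLinearMap.analyticAt_bilinear (ContinuousLinearMap.id ℝ (E →L[ℝ] E)) _)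
      (hRa.prod hWa)
  have toP : ∀ t, AnalyticAt ℝ W (t, z0) → P t := fun t ht =>
    AnalyticAt.fun_comp (g := W) (f := fun z : Z => (t, z)) ht (by fun_prop)
  let S : Set ℝ := {t | (t, z0) ∈ Ω}
  have hSo : IsOpen S := hΩ.preimage (by fun_prop)
  have hall : ∀ t ∈ S, P t := by
    have hpre : IsPreconnected S := hord.isPreconnected
    have hP0 : P 0 := by
      have : ∀ᶠ z in nhds z0, w0 = W (0, z) := by
        have hc : Continuous (fun z : Z => ((0:ℝ), z)) := by fun_prop
        filter_upwards [(hΩ.preimage hc).mem_nhds h00] with z hz using (hW0 z hz).symm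
      exact analyticAt_const.congr this
    have hloc : ∀ t1 ∈ S, ∀ᶠ t in nhds t1, (P t ↔ P t1) := by
      intro t1 h1
      have h := step t1 h1
      have ha : ∀ᶠ t in nhds t1, P t → AnalyticAt ℝ W (t1, z0) := by
        have hc : Continuous (fun t : ℝ => (t, t1)) := by fun_prop
        exact (hc.tendsto t1).eventually h
      have hb : ∀ᶠ t in nhds t1, P t1 → AnalyticAt ℝ W (t, z0) := by
        have hc : Continuous (fun t : ℝ => (t1, t)) := by fun_prop
        exact (hc.tendsto t1).eventually h
      filter_upwards [ha, hb] with t ha hb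
      exact ⟨fun h => toP _ (ha h), fun h => toP _ (hb h)⟩
    intro t ht
    have := hpre.induction₂ (fun a b => (P a ↔ P b))
      (fun x hx => by
        filter_upwards [nhdsWithin_le_nhds (hloc x hx)] with y hy using hy.symm)
      (fun x y w _ _ _ h1 h2 => h1.trans h2) (fun x y _ _ h => h.symm) ht h00
    exact this.2 hP0
  exact (step t0 h0).self_of_nhds (hall t0 h0)

theorem global_fin [FiniteDimensional ℝ Z] [FiniteDimensional ℝ E] (Ω : Set (ℝ × Z))
    (hΩ : IsOpen Ω)
    (hslice : ∀ z : Z, {t : ℝ | (t, z) ∈ Ω}.Nonempty →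
      (0, z) ∈ Ω ∧ Set.OrdConnected {t : ℝ | (t, z) ∈ Ω})
    (b : E →ₗ[ℝ] E →ₗ[ℝ] E)
    (A : ℝ × Z → E) (W : ℝ × Z → E) (hA : AnalyticOnNhd ℝ A Ω)
    (hW : ∀ x ∈ Ω, HasDerivAt (fun s : ℝ => W (s, x.2)) (b (A x) (W x)) x.1) (w0 : E)
    (hW0 : ∀ z : Z, (0, z) ∈ Ω → W (0, z) = w0) : AnalyticOnNhd ℝ W Ω := by
  let L : E →L[ℝ] (E →L[ℝ] E) :=
    LinearMap.toContinuousLinearMap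
      ((LinearMap.toContinuousLinearMap (𝕜 := ℝ) (E := E) (F' := E)).toLinearMap ∘ₗ b)
  have : CompleteSpace E := FiniteDimensional.complete ℝ _
  refine global_prop Ω hΩ hslice (fun x => L (A x)) W ?_ ?_ w0 hW0
  · intro x hx
    exact (L.analyticAt _).fun_comp (hA x hx)
  · intro x hx
    exact hW x hx

end helpers

theorem transport_fundamental_solution_analytic
    (N m : ℕ) (hN : 1 ≤ N) (hm : 1 ≤ m)
    (Ω : Set (ℝ × (Fin m → ℝ))) (hΩ : IsOpen Ω)
    (hslice : ∀ z : Fin m → ℝ, {t : ℝ | (t, z) ∈ Ω}.Nonempty →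
      (0, z) ∈ Ω ∧ Set.OrdConnected {t : ℝ | (t, z) ∈ Ω})
    (A W : ℝ × (Fin m → ℝ) → Matrix (Fin N) (Fin N) ℂ)
    (hA : AnalyticOnNhd ℝ A Ω)
    (hW : ∀ tz : ℝ × (Fin m → ℝ), tz ∈ Ω →
      HasDerivAt (fun s : ℝ => W (s, tz.2)) (-(A tz * W tz)) tz.1)
    (hW0 : ∀ z : Fin m → ℝ, (0, z) ∈ Ω → W (0, z) = 1) :
    AnalyticOnNhd ℝ W Ω := by
  exact global_fin Ω hΩ hslice (-(LinearMap.mul ℝ (Matrix (Fin N) (Fin N) ℂ))) A W hA hW 1 hW0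
end

section
/- Assume there are constants L, M ≥ 0 such that S_∞[a](t, z) ≤ L for all (t, z) ∈ [0, T] × V and S_∞[w](0, z) ≤ M for all z ∈ V. Then for every ν ∈ ℕ and every (t, z) ∈ [0, T] × V one has S_ν[w](t, z) ≤ M · e^{L t}; consequently the full series satisfies S_∞[w](t, z) ≤ M · e^{L t} for all (t, z) ∈ [0, T] × V. -/
open Matrix

attribute [local instance] Matrix.normedAddCommGroup Matrix.normedSpace

/-- Partial derivative in the time variable `t` of a function on `ℝ × ℝ^m`. -/
noncomputable def pdt {m : ℕ} (f : ℝ × (Fin m → ℝ) → ℂ) : ℝ × (Fin m → ℝ) → ℂ :=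
  fun x => deriv (fun s : ℝ => f (s, x.2)) x.1

/-- Partial derivative in the `i`-th parameter variable `z_i` of a function on
`ℝ × ℝ^m`. -/
noncomputable def pdz {m : ℕ} (i : Fin m) (f : ℝ × (Fin m → ℝ) → ℂ) :
    ℝ × (Fin m → ℝ) → ℂ :=
  fun x => deriv (fun s : ℝ => f (x.1, Function.update x.2 i s)) (x.2 i)

/-- The mixed partial derivative `∂_t^p ∂_z^α f` for a multi-index `α : Fin m → ℕ`. -/
noncomputable def mixedPartial {m : ℕ} (p : ℕ) (α : Fin m → ℕ)
    (f : ℝ × (Fin m → ℝ) → ℂ) : ℝ × (Fin m → ℝ) → ℂ :=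
  pdt^[p] (((List.finRange m).foldr (fun i g => (pdz i)^[α i] ∘ g) id) f)

/-- The weighted Taylor-coefficient sum
`S_ν[u](t, z) = ∑_{p + |α| ≤ ν} (ρ^{p+|α|} / (p! α!)) ∑_{i,j} |∂_t^p ∂_z^α u_{ij}(t, z)|`
of a matrix-valued function `u` on `ℝ × ℝ^m`, truncated at total order `ν`. -/
noncomputable def taylorMajorant {m N : ℕ} (ρ : ℝ) (ν : ℕ)
    (u : ℝ × (Fin m → ℝ) → Matrix (Fin N) (Fin N) ℂ) (x : ℝ × (Fin m → ℝ)) : ℝ :=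
  ∑ p ∈ Finset.range (ν + 1), ∑ k ∈ Finset.range (ν + 1 - p),
    ∑ α ∈ Finset.Nat.antidiagonalTuple m k,
      (ρ ^ (p + k) / ((Nat.factorial p : ℝ) * ∏ i, ((Nat.factorial (α i)) : ℝ))) *
        ∑ i : Fin N, ∑ j : Fin N, ‖mixedPartial p α (fun y => u y i j) x‖


namespace TG
set_option linter.unusedSectionVars false

section abs
variable {C : Type*} [NonUnitalCommRing C] [Module ℝ C] [IsScalarTower ℝ C C] [SMulCommClass ℝ C C]

noncomputable def Pf : (n : ℕ) → (Fin n → Module.End ℝ C) → (Fin n → ℕ) → Module.End ℝ C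
  | 0, _, _ => 1
  | n + 1, D, α => D 0 ^ α 0 * Pf n (Fin.tail D) (Fin.tail α)

lemma Pf_comm (d : Module.End ℝ C) : ∀ (n : ℕ) (D : Fin n → Module.End ℝ C) (α : Fin n → ℕ),
    (∀ i, Commute d (D i)) → Commute d (Pf n D α)
  | 0, _, _, _ => Commute.one_right d
  | n + 1, D, α, h => by
    rw [Pf]
    exact ((h 0).pow_right _).mul_right (Pf_comm d n _ _ (fun i => h i.succ))

lemma leib (d : Module.End ℝ C) (hd : ∀ f g, d (f * g) = d f * g + f * d g) (n : ℕ) (f g : C) :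
    (d ^ n) (f * g) = ∑ ij ∈ Finset.HasAntidiagonal.antidiagonal n,
      (n.choose ij.1 : ℝ) • ((d ^ ij.1) f * (d ^ ij.2) g) := by
  induction n with
  | zero => simp
  | succ n ih =>
    rw [pow_succ', Module.End.mul_apply, ih, map_sum]
    simp only [map_smul, hd, smul_add, Finset.sum_add_distrib, ← Module.End.mul_apply, ← pow_succ']
    have := Finset.sum_antidiagonal_choose_succ_nsmul (fun i j => (d ^ i) f * (d ^ j) g) n
    simp only [Nat.cast_smul_eq_nsmul]
    rw [this, add_comm]
    congr 1
    apply Finset.sum_congr rfl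
    intro x hx
    rw [Finset.HasAntidiagonal.mem_antidiagonal] at hx
    congr 1
    rw [← hx, Nat.choose_symm_add]

noncomputable def gg (ρ : ℝ) (ev : C → ℝ) (n : ℕ) (D : Fin n → Module.End ℝ C) (k : ℕ) (f : C) : ℝ :=
  ∑ α ∈ Finset.Nat.antidiagonalTuple n k,
    (ρ ^ k / ∏ i, ((α i).factorial : ℝ)) * ev (Pf n D α f)

structure Ev (ev : C → ℝ) : Prop where
  nonneg : ∀ f, 0 ≤ ev f
  zero : ev 0 = 0
  add : ∀ f g, ev (f + g) ≤ ev f + ev g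
  mul : ∀ f g, ev (f * g) ≤ ev f * ev g
  smul : ∀ (c : ℝ) f, 0 ≤ c → ev (c • f) = c * ev f

variable {ev : C → ℝ} (hev : Ev ev) {ρ : ℝ} (hρ : 0 < ρ)
include hev hρ

lemma gg_nonneg (n : ℕ) (D : Fin n → Module.End ℝ C) (k : ℕ) (f : C) : 0 ≤ gg ρ ev n D k f :=
  Finset.sum_nonneg fun α _ => mul_nonneg (by positivity) (hev.nonneg _)

lemma gg_add (n : ℕ) (D : Fin n → Module.End ℝ C) (k : ℕ) (f g : C) :
    gg ρ ev n D k (f + g) ≤ gg ρ ev n D k f + gg ρ ev n D k g := by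
  unfold gg
  rw [← Finset.sum_add_distrib]
  refine Finset.sum_le_sum fun α _ => ?_
  rw [← mul_add, map_add]
  exact mul_le_mul_of_nonneg_left (hev.add _ _) (by positivity)

omit hρ in
lemma gg_zero (n : ℕ) (D : Fin n → Module.End ℝ C) (k : ℕ) :
    gg ρ ev n D k 0 = 0 := by
  simp [gg, hev.zero]

omit hρ in
lemma gg_smul (n : ℕ) (D : Fin n → Module.End ℝ C) (k : ℕ) (c : ℝ) (hc : 0 ≤ c) (f : C) :
    gg ρ ev n D k (c • f) = c * gg ρ ev n D k f := by
  unfold gg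
  rw [Finset.mul_sum]
  refine Finset.sum_congr rfl fun α _ => ?_
  rw [map_smul, hev.smul _ _ hc]; ring

lemma gg_sum {ι : Type*} (n : ℕ) (D : Fin n → Module.End ℝ C) (k : ℕ) (s : Finset ι) (f : ι → C) :
    gg ρ ev n D k (∑ i ∈ s, f i) ≤ ∑ i ∈ s, gg ρ ev n D k (f i) := by
  classical
  induction s using Finset.induction_on with
  | empty => simp [gg_zero hev]
  | insert a s ha ih =>
    rw [Finset.sum_insert ha, Finset.sum_insert ha]
    exact (gg_add hev hρ _ _ _ _ _).trans (by gcongr)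

omit hev hρ in
lemma gg_succ (n : ℕ) (D : Fin (n + 1) → Module.End ℝ C) (hD : ∀ i j, Commute (D i) (D j))
    (k : ℕ) (f : C) :
    gg ρ ev (n + 1) D k f = ∑ ab ∈ Finset.HasAntidiagonal.antidiagonal k,
      (ρ ^ ab.1 / (ab.1.factorial : ℝ)) * gg ρ ev n (Fin.tail D) ab.2 ((D 0 ^ ab.1) f) := by
  unfold gg
  simp only [Finset.mul_sum]
  rw [Finset.sum_sigma']
  refine Finset.sum_nbij' (fun α => ⟨(α 0, k - α 0), Fin.tail α⟩) (fun x => Fin.cons x.1.1 x.2)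
    ?_ ?_ ?_ ?_ ?_
  · intro α hα
    simp only [Finset.Nat.mem_antidiagonalTuple, Fin.sum_univ_succ] at hα
    simp only [Finset.mem_sigma, Finset.HasAntidiagonal.mem_antidiagonal, Finset.Nat.mem_antidiagonalTuple, Fin.tail]
    omega
  · rintro ⟨⟨a, b⟩, α⟩ h
    simp only [Finset.mem_sigma, Finset.HasAntidiagonal.mem_antidiagonal, Finset.Nat.mem_antidiagonalTuple] at h
    simp [Finset.Nat.mem_antidiagonalTuple, Fin.sum_univ_succ, h.1, h.2]
  · intro α _
    simp
  · rintro ⟨⟨a, b⟩, α⟩ h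
    simp only [Finset.mem_sigma, Finset.HasAntidiagonal.mem_antidiagonal, Finset.Nat.mem_antidiagonalTuple] at h
    simp; omega
  · intro α hα
    simp only [Finset.Nat.mem_antidiagonalTuple, Fin.sum_univ_succ] at hα
    have hk : ρ ^ k = ρ ^ α 0 * ρ ^ (k - α 0) := by rw [← pow_add]; congr 1; omega
    have hc := Pf_comm (D 0 ^ α 0) n (Fin.tail D) (Fin.tail α) (fun i => (hD _ _).pow_left _)
    rw [Pf, hc.eq, Module.End.mul_apply, Fin.prod_univ_succ, hk]
    simp only [Fin.tail]
    rw [mul_div_mul_comm]; ring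

lemma gg_mul : ∀ (n : ℕ) (D : Fin n → Module.End ℝ C) (hD : ∀ i j, Commute (D i) (D j))
    (hd : ∀ i f g, D i (f * g) = D i f * g + f * D i g) (k : ℕ) (f g : C),
    gg ρ ev n D k (f * g) ≤ ∑ rs ∈ Finset.HasAntidiagonal.antidiagonal k, gg ρ ev n D rs.1 f * gg ρ ev n D rs.2 g
  | 0, D, hD, hd, 0, f, g => by
    simp [gg, Pf, hev.mul]
  | 0, D, hD, hd, k + 1, f, g => by
    refine le_trans (le_of_eq ?_) (Finset.sum_nonneg fun rs _ =>
      mul_nonneg (gg_nonneg hev hρ _ _ _ _) (gg_nonneg hev hρ _ _ _ _))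
    simp [gg]
  | n + 1, D, hD, hd, k, f, g => by
    have ih := gg_mul n (Fin.tail D) (fun i j => hD _ _) (fun i => hd _)
    have h1 : gg ρ ev (n + 1) D k (f * g) ≤ ∑ ab ∈ Finset.HasAntidiagonal.antidiagonal k,
        ∑ ij ∈ Finset.HasAntidiagonal.antidiagonal ab.1, ∑ rs ∈ Finset.HasAntidiagonal.antidiagonal ab.2,
        ((ρ ^ ij.1 / (ij.1.factorial : ℝ)) * gg ρ ev n (Fin.tail D) rs.1 ((D 0 ^ ij.1) f)) *
        ((ρ ^ ij.2 / (ij.2.factorial : ℝ)) * gg ρ ev n (Fin.tail D) rs.2 ((D 0 ^ ij.2) g)) := by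
      rw [gg_succ n D hD]
      refine Finset.sum_le_sum fun ab _ => ?_
      rw [leib (D 0) (hd 0)]
      refine (mul_le_mul_of_nonneg_left (gg_sum hev hρ _ _ _ _ _) (by positivity)).trans ?_
      rw [Finset.mul_sum]
      refine Finset.sum_le_sum fun ij hij => ?_
      rw [gg_smul hev _ _ _ _ (by positivity)]
      rw [Finset.HasAntidiagonal.mem_antidiagonal] at hij
      refine (mul_le_mul_of_nonneg_left (mul_le_mul_of_nonneg_left (ih _ _ _)
        (by positivity)) (by positivity)).trans (le_of_eq ?_)
      rw [Finset.mul_sum, Finset.mul_sum]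
      refine Finset.sum_congr rfl fun rs _ => ?_
      rw [← hij, Nat.cast_add_choose, pow_add]
      field_simp
    refine h1.trans (le_of_eq ?_)
    simp only [gg_succ n D hD, Finset.sum_mul_sum, Finset.sum_sigma']
    refine Finset.sum_nbij'
      (fun x => ⟨(x.2.1.1 + x.2.2.1, x.2.1.2 + x.2.2.2), ⟨(x.2.1.1, x.2.2.1), (x.2.1.2, x.2.2.2)⟩⟩)
      (fun x => ⟨(x.2.1.1 + x.2.2.1, x.2.1.2 + x.2.2.2), ⟨(x.2.1.1, x.2.2.1), (x.2.1.2, x.2.2.2)⟩⟩)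
      ?_ ?_ ?_ ?_ ?_
    · rintro ⟨⟨a, b⟩, ⟨⟨i, j⟩, ⟨r, s⟩⟩⟩ h
      simp only [Finset.mem_sigma, Finset.HasAntidiagonal.mem_antidiagonal] at h ⊢
      exact ⟨by omega, trivial, trivial⟩
    · rintro ⟨⟨a, b⟩, ⟨⟨i, j⟩, ⟨r, s⟩⟩⟩ h
      simp only [Finset.mem_sigma, Finset.HasAntidiagonal.mem_antidiagonal] at h ⊢
      exact ⟨by omega, trivial, trivial⟩
    · rintro ⟨⟨a, b⟩, ⟨⟨i, j⟩, ⟨r, s⟩⟩⟩ h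
      simp only [Finset.mem_sigma, Finset.HasAntidiagonal.mem_antidiagonal] at h ⊢
      obtain ⟨h1, h2, h3⟩ := h
      subst h2 h3; rfl
    · rintro ⟨⟨a, b⟩, ⟨⟨i, j⟩, ⟨r, s⟩⟩⟩ h
      simp only [Finset.mem_sigma, Finset.HasAntidiagonal.mem_antidiagonal] at h ⊢
      obtain ⟨h1, h2, h3⟩ := h
      subst h2 h3; rfl
    · rintro ⟨⟨a, b⟩, ⟨⟨i, j⟩, ⟨r, s⟩⟩⟩ h
      rfl

/-- truncated sums -/
noncomputable def ss (ρ : ℝ) (ev : C → ℝ) (n : ℕ) (D : Fin n → Module.End ℝ C) (ν : ℕ) (f : C) : ℝ :=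
  ∑ k ∈ Finset.range (ν + 1), gg ρ ev n D k f

lemma ss_nonneg (n : ℕ) (D : Fin n → Module.End ℝ C) (k : ℕ) (f : C) : 0 ≤ ss ρ ev n D k f :=
  Finset.sum_nonneg fun _ _ => gg_nonneg hev hρ _ _ _ _

lemma ss_sum {ι : Type*} (n : ℕ) (D : Fin n → Module.End ℝ C) (ν : ℕ) (s : Finset ι) (f : ι → C) :
    ss ρ ev n D ν (∑ i ∈ s, f i) ≤ ∑ i ∈ s, ss ρ ev n D ν (f i) := by
  unfold ss
  rw [Finset.sum_comm]
  exact Finset.sum_le_sum fun k _ => gg_sum hev hρ _ _ _ _ _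

lemma ss_mul (n : ℕ) (D : Fin n → Module.End ℝ C) (hD : ∀ i j, Commute (D i) (D j))
    (hd : ∀ i f g, D i (f * g) = D i f * g + f * D i g) (ν : ℕ) (f g : C) :
    ss ρ ev n D ν (f * g) ≤ ss ρ ev n D ν f * ss ρ ev n D ν g := by
  unfold ss
  rw [Finset.sum_mul_sum, ← Finset.sum_product']
  refine (Finset.sum_le_sum fun k _ => gg_mul hev hρ n D hD hd k f g).trans ?_
  rw [Finset.sum_sigma']
  have hinj : Set.InjOn (fun x : (Σ _ : ℕ, ℕ × ℕ) => x.2)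
      ((Finset.range (ν + 1)).sigma fun k => Finset.HasAntidiagonal.antidiagonal k) := by
    rintro ⟨a, b⟩ h ⟨c, d⟩ h' e
    simp only [Finset.coe_sigma, Set.mem_sigma_iff, Finset.mem_coe, Finset.HasAntidiagonal.mem_antidiagonal] at h h' e
    subst e
    obtain ⟨-, h⟩ := h
    obtain ⟨-, h'⟩ := h'
    subst h; subst h'; rfl
  rw [← Finset.sum_image (g := fun x : (Σ _ : ℕ, ℕ × ℕ) => x.2)
    (f := fun x : ℕ × ℕ => gg ρ ev n D x.1 f * gg ρ ev n D x.2 g) hinj]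
  refine Finset.sum_le_sum_of_subset_of_nonneg ?_ fun x _ _ =>
    mul_nonneg (gg_nonneg hev hρ _ _ _ _) (gg_nonneg hev hρ _ _ _ _)
  intro x hx
  simp only [Finset.mem_image, Finset.mem_sigma, Finset.mem_range, Finset.HasAntidiagonal.mem_antidiagonal,
    Finset.mem_product] at hx ⊢
  obtain ⟨y, ⟨h1, h2⟩, rfl⟩ := hx
  omega

/-- matrix estimate -/
lemma ss_mat {N : ℕ} (n : ℕ) (D : Fin n → Module.End ℝ C) (hD : ∀ i j, Commute (D i) (D j))
    (hd : ∀ i f g, D i (f * g) = D i f * g + f * D i g) (ν : ℕ) (A W : Fin N → Fin N → C) :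
    ∑ i, ∑ j, ss ρ ev n D ν (∑ k, A i k * W k j) ≤
      (∑ i, ∑ j, ss ρ ev n D ν (A i j)) * (∑ i, ∑ j, ss ρ ev n D ν (W i j)) := by
  have hn := ss_nonneg hev hρ n D ν
  rw [Finset.sum_mul]
  refine Finset.sum_le_sum fun i _ => ?_
  calc ∑ j, ss ρ ev n D ν (∑ k, A i k * W k j)
      ≤ ∑ j, ∑ k, ss ρ ev n D ν (A i k) * ss ρ ev n D ν (W k j) :=
        Finset.sum_le_sum fun j _ => (ss_sum hev hρ _ _ _ _ _).trans
          (Finset.sum_le_sum fun k _ => ss_mul hev hρ _ _ hD hd _ _ _)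
    _ = ∑ k, ss ρ ev n D ν (A i k) * ∑ j, ss ρ ev n D ν (W k j) := by
        rw [Finset.sum_comm]; simp only [Finset.mul_sum]
    _ ≤ _ := by
        rw [Finset.sum_mul]
        refine Finset.sum_le_sum fun k _ => mul_le_mul_of_nonneg_left ?_ (hn _)
        exact Finset.single_le_sum (f := fun i => ∑ j, ss ρ ev n D ν (W i j))
          (fun i _ => Finset.sum_nonneg fun j _ => hn _) (Finset.mem_univ k)

end abs

section conc
open scoped ContDiff

variable {m : ℕ}

/-- smooth functions on `Ω`, extended by zero -/
def CC (Ω : Set (ℝ × (Fin m → ℝ))) : NonUnitalSubalgebra ℝ (ℝ × (Fin m → ℝ) → ℂ) where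
  carrier := {f | ContDiffOn ℝ ∞ f Ω ∧ ∀ x ∉ Ω, f x = 0}
  add_mem' := fun ha hb => ⟨ha.1.add hb.1, fun x hx => by simp [ha.2 x hx, hb.2 x hx]⟩
  zero_mem' := ⟨contDiffOn_const, fun _ _ => rfl⟩
  mul_mem' := fun ha hb => ⟨ha.1.mul hb.1, fun x hx => by simp [ha.2 x hx]⟩
  smul_mem' := fun c f hf => ⟨contDiffOn_const.smul hf.1, fun x hx => by simp [hf.2 x hx]⟩

variable {Ω : Set (ℝ × (Fin m → ℝ))}

noncomputable def mk (f : ℝ × (Fin m → ℝ) → ℂ) (hf : ContDiffOn ℝ ∞ f Ω) : CC Ω :=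
  ⟨Ω.indicator f, hf.congr fun x hx => by simp [hx], fun x hx => by simp [hx]⟩

lemma mk_eqOn (f : ℝ × (Fin m → ℝ) → ℂ) (hf : ContDiffOn ℝ ∞ f Ω) :
    Set.EqOn f (mk f hf : CC Ω).1 Ω := fun x hx => by simp [mk, hx]

lemma CC.ext {F G : CC Ω} (h : Set.EqOn F.1 G.1 Ω) : F = G := by
  apply Subtype.ext
  funext x
  by_cases hx : x ∈ Ω
  · exact h hx
  · rw [F.2.2 x hx, G.2.2 x hx]

variable (hΩ : IsOpen Ω)
include hΩ

lemma CC.cda (F : CC Ω) {x} (hx : x ∈ Ω) : ContDiffAt ℝ ∞ F.1 x :=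
  F.2.1.contDiffAt (hΩ.mem_nhds hx)

lemma CC.da (F : CC Ω) {x} (hx : x ∈ Ω) : DifferentiableAt ℝ F.1 x :=
  (CC.cda hΩ F hx).differentiableAt (by simp)

noncomputable def dd (v : ℝ × (Fin m → ℝ)) : Module.End ℝ (CC Ω) where
  toFun F := mk (fun x => fderiv ℝ F.1 x v)
    ((F.2.1.fderiv_of_isOpen hΩ (m := ∞) (by simp)).clm_apply contDiffOn_const)
  map_add' F G := by
    apply CC.ext
    intro x hx
    have := fderiv_add (CC.da hΩ F hx) (CC.da hΩ G hx)
    simp [mk, hx, this]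
  map_smul' c F := by
    apply CC.ext
    intro x hx
    have := fderiv_const_smul (CC.da hΩ F hx) c
    simp [mk, hx, this]

lemma dd_apply (v : ℝ × (Fin m → ℝ)) (F : CC Ω) {x} (hx : x ∈ Ω) :
    (dd hΩ v F).1 x = fderiv ℝ F.1 x v := by
  simp [dd, mk, hx]

lemma dd_leib (v : ℝ × (Fin m → ℝ)) (F G : CC Ω) :
    dd hΩ v (F * G) = dd hΩ v F * G + F * dd hΩ v G := by
  apply CC.ext
  intro x hx
  have h := fderiv_mul (CC.da hΩ F hx) (CC.da hΩ G hx)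
  rw [dd_apply hΩ v _ hx]
  change fderiv ℝ (F.1 * G.1) x v = (dd hΩ v F).1 x * G.1 x + F.1 x * (dd hΩ v G).1 x
  rw [dd_apply hΩ v _ hx, dd_apply hΩ v _ hx, h]
  simp
  ring

lemma dd_comm (v u : ℝ × (Fin m → ℝ)) : Commute (dd hΩ v) (dd hΩ u) := by
  apply LinearMap.ext
  intro F
  apply CC.ext
  intro x hx
  have key : ∀ v u : ℝ × (Fin m → ℝ), (dd hΩ v (dd hΩ u F)).1 x = fderiv ℝ (fderiv ℝ F.1) x v u := by
    intro v u
    rw [dd_apply hΩ v _ hx]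
    have : (dd hΩ u F).1 =ᶠ[nhds x] fun y => fderiv ℝ F.1 y u := by
      filter_upwards [hΩ.mem_nhds hx] with y hy using dd_apply hΩ u F hy
    rw [this.fderiv_eq]
    have hd : DifferentiableAt ℝ (fderiv ℝ F.1) x :=
      ((CC.cda hΩ F hx).fderiv_right (m := ∞) (by simp)).differentiableAt (by simp)
    rw [fderiv_clm_apply hd (by fun_prop)]
    simp
  have hs : IsSymmSndFDerivAt ℝ F.1 x := (CC.cda hΩ F hx).isSymmSndFDerivAt (by
    simpa using (WithTop.coe_le_coe.2 le_top : (((2 : ℕ∞) : WithTop ℕ∞)) ≤ ∞))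
  change (dd hΩ v (dd hΩ u F)).1 x = (dd hΩ u (dd hΩ v F)).1 x
  rw [key, key, hs.eq]

/-- pdt agrees with dd -/
lemma pdt_eqOn {f : ℝ × (Fin m → ℝ) → ℂ} {F : CC Ω} (h : Set.EqOn f F.1 Ω) :
    Set.EqOn (pdt f) (dd hΩ (1, 0) F).1 Ω := by
  intro x hx
  rw [dd_apply hΩ _ _ hx, pdt]
  have hf : HasFDerivAt f (fderiv ℝ F.1 x) x :=
    (CC.da hΩ F hx).hasFDerivAt.congr_of_eventuallyEq
      (by filter_upwards [hΩ.mem_nhds hx] with y hy using h hy)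
  have hl : HasDerivAt (fun s : ℝ => (s, x.2)) ((1 : ℝ), (0 : Fin m → ℝ)) x.1 :=
    (hasDerivAt_id _).prodMk (hasDerivAt_const _ _)
  exact (HasFDerivAt.comp_hasDerivAt (f := fun s : ℝ => (s, x.2)) x.1 hf hl).deriv

lemma pdz_eqOn (i : Fin m) {f : ℝ × (Fin m → ℝ) → ℂ} {F : CC Ω} (h : Set.EqOn f F.1 Ω) :
    Set.EqOn (pdz i f) (dd hΩ (0, Pi.single i 1) F).1 Ω := by
  intro x hx
  rw [dd_apply hΩ _ _ hx, pdz]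
  have hl : HasDerivAt (fun s : ℝ => (x.1, Function.update x.2 i s))
      ((0 : ℝ), (Pi.single i 1 : Fin m → ℝ)) (x.2 i) :=
    (hasDerivAt_const _ _).prodMk (hasDerivAt_update _ _ _)
  have hf : HasFDerivAt f (fderiv ℝ F.1 x) ((fun s : ℝ => (x.1, Function.update x.2 i s)) (x.2 i)) := by
    simp only [Function.update_eq_self]
    exact (CC.da hΩ F hx).hasFDerivAt.congr_of_eventuallyEq
      (by filter_upwards [hΩ.mem_nhds hx] with y hy using h hy)
  exact (HasFDerivAt.comp_hasDerivAt (x.2 i) hf hl).deriv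

omit hΩ in
lemma iter_eqOn {P : (ℝ × (Fin m → ℝ) → ℂ) → (ℝ × (Fin m → ℝ) → ℂ)} {D : Module.End ℝ (CC Ω)}
    (hP : ∀ f (F : CC Ω), Set.EqOn f F.1 Ω → Set.EqOn (P f) (D F).1 Ω) (n : ℕ) :
    ∀ f (F : CC Ω), Set.EqOn f F.1 Ω → Set.EqOn (P^[n] f) ((D ^ n) F).1 Ω := by
  induction n with
  | zero => intro f F h; simpa using h
  | succ n ih =>
    intro f F h
    rw [Function.iterate_succ', pow_succ', Module.End.mul_apply]
    exact hP _ _ (ih _ _ h)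

omit hΩ in
lemma fold_eqOn : ∀ (n : ℕ) (P : Fin n → (ℝ × (Fin m → ℝ) → ℂ) → (ℝ × (Fin m → ℝ) → ℂ))
    (D : Fin n → Module.End ℝ (CC Ω)) (α : Fin n → ℕ)
    (_ : ∀ i, ∀ f (F : CC Ω), Set.EqOn f F.1 Ω → Set.EqOn (P i f) (D i F).1 Ω)
    (f) (F : CC Ω) (_ : Set.EqOn f F.1 Ω),
    Set.EqOn (((List.finRange n).foldr (fun i g => (P i)^[α i] ∘ g) id) f) (Pf n D α F).1 Ω
  | 0, P, D, α, hP, f, F, h => by simpa [Pf] using h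
  | n + 1, P, D, α, hP, f, F, h => by
    rw [List.finRange_succ, List.foldr_cons, List.foldr_map, Pf, Module.End.mul_apply]
    exact iter_eqOn (hP 0) _ _ _
      (fold_eqOn n (fun i => P i.succ) (Fin.tail D) (Fin.tail α) (fun i => hP i.succ) f F h)

/-- the full family of derivations -/
noncomputable def DD : Fin (m + 1) → Module.End ℝ (CC Ω) :=
  Fin.cons (dd hΩ (1, 0)) (fun i => dd hΩ (0, Pi.single i 1))

lemma DD_comm (i j : Fin (m + 1)) : Commute (DD hΩ i) (DD hΩ j) := by
  cases i using Fin.cases <;> cases j using Fin.cases <;> exact dd_comm hΩ _ _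

lemma DD_leib (i : Fin (m + 1)) (F G : CC Ω) :
    DD hΩ i (F * G) = DD hΩ i F * G + F * DD hΩ i G := by
  cases i using Fin.cases <;> exact dd_leib hΩ _ _ _

lemma mixed_eqOn (p : ℕ) (α : Fin m → ℕ) {f : ℝ × (Fin m → ℝ) → ℂ} {F : CC Ω}
    (h : Set.EqOn f F.1 Ω) :
    Set.EqOn (mixedPartial p α f) (Pf (m + 1) (DD hΩ) (Fin.cons p α) F).1 Ω := by
  rw [Pf, Module.End.mul_apply]
  exact iter_eqOn (fun f F h => pdt_eqOn hΩ h) p _ _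
    (fold_eqOn m pdz _ _ (fun i f F h => pdz_eqOn hΩ i h) f F h)

omit hΩ in
lemma ev_Ev (x : ℝ × (Fin m → ℝ)) : Ev (fun F : CC Ω => ‖F.1 x‖) where
  nonneg _ := norm_nonneg _
  zero := by simp
  add _ _ := norm_add_le _ _
  mul _ _ := norm_mul_le _ _
  smul c F hc := by
    change ‖c • F.1 x‖ = _
    rw [norm_smul, Real.norm_of_nonneg hc]

lemma taylor_eq {N : ℕ} (ρ : ℝ) (ν : ℕ) (u : ℝ × (Fin m → ℝ) → Matrix (Fin N) (Fin N) ℂ)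
    (U : Fin N → Fin N → CC Ω) (hU : ∀ i j, Set.EqOn (fun y => u y i j) (U i j).1 Ω)
    {x : ℝ × (Fin m → ℝ)} (hx : x ∈ Ω) :
    taylorMajorant ρ ν u x =
      ∑ i, ∑ j, ss ρ (fun F : CC Ω => ‖F.1 x‖) (m + 1) (DD hΩ) ν (U i j) := by
  have e : ∀ p α i j, ‖mixedPartial p α (fun y => u y i j) x‖ =
      ‖(Pf (m + 1) (DD hΩ) (Fin.cons p α) (U i j)).1 x‖ := fun p α i j => by
    rw [mixed_eqOn hΩ p α (hU i j) hx]
  unfold taylorMajorant ss gg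
  simp only [e]
  rw [← Finset.sum_range_diag_flip (ν + 1) (fun p k => ∑ α ∈ Finset.Nat.antidiagonalTuple m k,
      (ρ ^ (p + k) / ((Nat.factorial p : ℝ) * ∏ i, ((Nat.factorial (α i)) : ℝ))) *
        ∑ i : Fin N, ∑ j : Fin N, ‖(Pf (m + 1) (DD hΩ) (Fin.cons p α) (U i j)).1 x‖)]
  have e2 : ∀ F : CC Ω, ∀ n : ℕ, ∑ α ∈ Finset.Nat.antidiagonalTuple (m + 1) n,
      (ρ ^ n / ∏ i, ((α i).factorial : ℝ)) * ‖(Pf (m + 1) (DD hΩ) α F).1 x‖ =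
      ∑ p ∈ Finset.range (n + 1), ∑ α ∈ Finset.Nat.antidiagonalTuple m (n - p),
      (ρ ^ (p + (n - p)) / ((Nat.factorial p : ℝ) * ∏ i, ((Nat.factorial (α i)) : ℝ))) *
       ‖(Pf (m + 1) (DD hΩ) (Fin.cons p α) F).1 x‖ := by
    intro F n
    rw [Finset.sum_sigma']
    refine Finset.sum_nbij' (fun α => ⟨α 0, Fin.tail α⟩) (fun x => Fin.cons x.1 x.2)
      ?_ ?_ ?_ ?_ ?_
    · intro α hα
      simp only [Finset.Nat.mem_antidiagonalTuple, Fin.sum_univ_succ] at hα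
      simp only [Finset.mem_sigma, Finset.mem_range, Finset.Nat.mem_antidiagonalTuple, Fin.tail]
      omega
    · rintro ⟨a, α⟩ h
      simp only [Finset.mem_sigma, Finset.mem_range, Finset.Nat.mem_antidiagonalTuple] at h
      simp [Finset.Nat.mem_antidiagonalTuple, Fin.sum_univ_succ, h.2]
      omega
    · intro α _
      simp
    · rintro ⟨a, α⟩ h
      simp
    · intro α hα
      simp only [Finset.Nat.mem_antidiagonalTuple, Fin.sum_univ_succ] at hα
      rw [Fin.prod_univ_succ]
      have : α 0 + (n - α 0) = n := by omega
      simp only [this, Fin.cons_self_tail]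
      rfl
  simp only [e2]
  simp only [Finset.mul_sum]
  -- commute sums
  symm
  rw [Finset.sum_congr rfl fun i _ => Finset.sum_comm, Finset.sum_comm]
  refine Finset.sum_congr rfl fun n _ => ?_
  rw [Finset.sum_congr rfl fun i _ => Finset.sum_comm, Finset.sum_comm]
  refine Finset.sum_congr rfl fun p _ => ?_
  rw [Finset.sum_congr rfl fun i _ => Finset.sum_comm, Finset.sum_comm]

/-- locality and closure -/
lemma dd_zero {U : Set (ℝ × (Fin m → ℝ))} (hU : IsOpen U) (hs : U ⊆ Ω) (v) (F : CC Ω)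
    (h : ∀ x ∈ U, F.1 x = 0) : ∀ x ∈ U, (dd hΩ v F).1 x = 0 := by
  intro x hx
  rw [dd_apply hΩ v F (hs hx)]
  have : F.1 =ᶠ[nhds x] fun _ => 0 := by
    filter_upwards [hU.mem_nhds hx] with y hy using h y hy
  rw [this.fderiv_eq]
  simp

omit hΩ in
lemma Pf_zero {U : Set (ℝ × (Fin m → ℝ))} : ∀ (n : ℕ) (D : Fin n → Module.End ℝ (CC Ω))
    (_ : ∀ i, ∀ F : CC Ω, (∀ x ∈ U, F.1 x = 0) → ∀ x ∈ U, (D i F).1 x = 0) (α : Fin n → ℕ)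
    (F : CC Ω) (_ : ∀ x ∈ U, F.1 x = 0), ∀ x ∈ U, (Pf n D α F).1 x = 0
  | 0, D, hD, α, F, h => by simpa [Pf] using h
  | n + 1, D, hD, α, F, h => by
    have ih := Pf_zero n (Fin.tail D) (fun i => hD i.succ) (Fin.tail α) F h
    rw [Pf, Module.End.mul_apply]
    generalize Pf n (Fin.tail D) (Fin.tail α) F = G at ih
    induction α 0 with
    | zero => simpa using ih
    | succ k ihk =>
      rw [pow_succ', Module.End.mul_apply]
      exact hD 0 _ ihk

lemma Pf_zero_Icc {T : ℝ} (hT : 0 < T) {V : Set (Fin m → ℝ)} (hV : IsOpen V)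
    (hsub : Set.Icc (0 : ℝ) T ×ˢ V ⊆ Ω) (β : Fin (m + 1) → ℕ) (F : CC Ω)
    (h : ∀ t ∈ Set.Icc (0 : ℝ) T, ∀ z ∈ V, F.1 (t, z) = 0) :
    ∀ t ∈ Set.Icc (0 : ℝ) T, ∀ z ∈ V, (Pf (m + 1) (DD hΩ) β F).1 (t, z) = 0 := by
  intro t ht z hz
  have hs : Set.Ioo (0 : ℝ) T ×ˢ V ⊆ Ω :=
    (Set.prod_mono Set.Ioo_subset_Icc_self le_rfl).trans hsub
  have h0 := Pf_zero (U := Set.Ioo (0 : ℝ) T ×ˢ V) (m + 1) (DD hΩ) (fun i F hF => by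
    cases i using Fin.cases <;> exact dd_zero hΩ (isOpen_Ioo.prod hV) hs _ F hF) β F
    (fun x hx => h x.1 (Set.Ioo_subset_Icc_self hx.1) x.2 hx.2)
  set G := Pf (m + 1) (DD hΩ) β F
  have hc : ContinuousOn (fun s : ℝ => G.1 (s, z)) (Set.Icc 0 T) :=
    G.2.1.continuousOn.comp (by fun_prop) (fun s hs => hsub ⟨hs, hz⟩)
  have : Set.EqOn (fun s : ℝ => G.1 (s, z)) (fun _ => 0) (Set.Icc 0 T) := by
    refine Set.EqOn.of_subset_closure (s := Set.Ioo 0 T) (fun s hs => h0 (s, z) ⟨hs, hz⟩) hc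
      continuousOn_const Set.Ioo_subset_Icc_self ?_
    rw [closure_Ioo hT.ne]
  exact this ht

end conc

section gron
open scoped ContDiff
variable {m : ℕ} {Ω : Set (ℝ × (Fin m → ℝ))} (hΩ : IsOpen Ω)

/-- index set of the truncated sum -/
abbrev KK (m ν : ℕ) : Finset (Σ _ : ℕ, Fin (m + 1) → ℕ) :=
  (Finset.range (ν + 1)).sigma (fun n => Finset.Nat.antidiagonalTuple (m + 1) n)

noncomputable def cf (ρ : ℝ) (κ : Σ _ : ℕ, Fin (m + 1) → ℕ) : ℝ :=
  ρ ^ κ.1 / ∏ i, ((κ.2 i).factorial : ℝ)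

lemma sum_eq {N : ℕ} {ρ : ℝ} (hρ : 0 < ρ) (ν : ℕ) (U : Fin N → Fin N → CC Ω) (x : ℝ × (Fin m → ℝ)) :
    ∑ q : (KK m ν) × Fin N × Fin N,
      ‖cf ρ q.1.1 • (Pf (m + 1) (DD hΩ) q.1.1.2 (U q.2.1 q.2.2)).1 x‖ =
    ∑ i, ∑ j, ss ρ (fun F : CC Ω => ‖F.1 x‖) (m + 1) (DD hΩ) ν (U i j) := by
  rw [Fintype.sum_prod_type_right, Fintype.sum_prod_type]
  refine Finset.sum_congr rfl fun i _ => Finset.sum_congr rfl fun j _ => ?_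
  dsimp only
  rw [Finset.sum_coe_sort (KK m ν)
    (fun κ => ‖cf ρ κ • (Pf (m + 1) (DD hΩ) κ.2 (U i j)).1 x‖), Finset.sum_sigma]
  unfold ss gg
  refine Finset.sum_congr rfl fun n _ => Finset.sum_congr rfl fun α _ => ?_
  rw [norm_smul, Real.norm_of_nonneg (by unfold cf; positivity)]
  rfl

lemma main {N : ℕ} {T ρ : ℝ} (hT : 0 < T) (hρ : 0 < ρ) {V : Set (Fin m → ℝ)} (hV : IsOpen V)
    (hsub : Set.Icc (0 : ℝ) T ×ˢ V ⊆ Ω) (A W : Fin N → Fin N → CC Ω)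
    (htr : ∀ t ∈ Set.Icc (0 : ℝ) T, ∀ z ∈ V, ∀ i j,
      (dd hΩ (1, 0) (W i j) + ∑ k, A i k * W k j).1 (t, z) = 0)
    (L M : ℝ) (ν : ℕ)
    (hLa : ∀ t ∈ Set.Icc (0 : ℝ) T, ∀ z ∈ V,
      ∑ i, ∑ j, ss ρ (fun F : CC Ω => ‖F.1 (t, z)‖) (m + 1) (DD hΩ) ν (A i j) ≤ L)
    (hMw : ∀ z ∈ V,
      ∑ i, ∑ j, ss ρ (fun F : CC Ω => ‖F.1 (0, z)‖) (m + 1) (DD hΩ) ν (W i j) ≤ M) :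
    ∀ t ∈ Set.Icc (0 : ℝ) T, ∀ z ∈ V,
      ∑ i, ∑ j, ss ρ (fun F : CC Ω => ‖F.1 (t, z)‖) (m + 1) (DD hΩ) ν (W i j) ≤
        M * Real.exp (L * t) := by
  intro t ht z hz
  let vec : (Fin N → Fin N → CC Ω) → ℝ → PiLp 1 (fun _ : (KK m ν) × Fin N × Fin N => ℂ) :=
    fun U s => WithLp.toLp 1 fun q =>
      cf ρ q.1.1 • (Pf (m + 1) (DD hΩ) q.1.1.2 (U q.2.1 q.2.2)).1 (s, z)
  have hvec : ∀ U s, ‖vec U s‖ =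
      ∑ i, ∑ j, ss ρ (fun F : CC Ω => ‖F.1 (s, z)‖) (m + 1) (DD hΩ) ν (U i j) := by
    intro U s
    rw [PiLp.norm_eq_of_L1, ← sum_eq hΩ hρ]
  have hder : ∀ s ∈ Set.Icc (0 : ℝ) T,
      HasDerivAt (vec W) (vec (fun i j => dd hΩ (1, 0) (W i j)) s) s := by
    intro s hs
    have hx : (s, z) ∈ Ω := hsub ⟨hs, hz⟩
    have hpi : HasDerivAt (fun s => (vec W s).ofLp)
        (vec (fun i j => dd hΩ (1, 0) (W i j)) s).ofLp s := by
      rw [hasDerivAt_pi]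
      intro q
      refine HasDerivAt.const_smul (cf ρ q.1.1) ?_
      have hc := Pf_comm (dd hΩ (1, 0)) (m + 1) (DD hΩ) q.1.1.2 (fun i => DD_comm hΩ 0 i)
      have hc' := LinearMap.congr_fun hc.eq (W q.2.1 q.2.2)
      rw [Module.End.mul_apply, Module.End.mul_apply] at hc'
      rw [← hc', dd_apply hΩ _ _ hx]
      have hl : HasDerivAt (fun s : ℝ => (s, z)) ((1 : ℝ), (0 : Fin m → ℝ)) s :=
        (hasDerivAt_id _).prodMk (hasDerivAt_const _ _)
      exact HasFDerivAt.comp_hasDerivAt (f := fun s : ℝ => (s, z)) s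
        (CC.da hΩ (Pf (m + 1) (DD hΩ) q.1.1.2 (W q.2.1 q.2.2)) hx).hasFDerivAt hl
    exact (PiLp.continuousLinearEquiv 1 ℝ
      (fun _ : (KK m ν) × Fin N × Fin N => ℂ)).symm.hasFDerivAt.comp_hasDerivAt s hpi
  have hg := norm_le_gronwallBound_of_norm_deriv_right_le (f := vec W)
    (f' := vec (fun i j => dd hΩ (1, 0) (W i j))) (δ := M) (K := L) (ε := 0) (a := 0) (b := T)
    (fun s hs => (hder s hs).continuousAt.continuousWithinAt)
    (fun s hs => (hder s (Set.Ico_subset_Icc_self hs)).hasDerivWithinAt)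
    (by rw [hvec]; exact hMw z hz)
    (by
      intro s hs
      have hs := Set.Ico_subset_Icc_self hs
      have e : ‖vec (fun i j => dd hΩ (1, 0) (W i j)) s‖ =
          ‖vec (fun i j => ∑ k, A i k * W k j) s‖ := by
        rw [PiLp.norm_eq_of_L1, PiLp.norm_eq_of_L1]
        refine Finset.sum_congr rfl fun q _ => ?_
        have h0 := Pf_zero_Icc hΩ hT hV hsub q.1.1.2 _
          (fun t ht z hz => htr t ht z hz q.2.1 q.2.2) s hs z hz
        rw [map_add] at h0
        change (Pf (m + 1) (DD hΩ) q.1.1.2 (dd hΩ (1, 0) (W q.2.1 q.2.2))).1 (s, z) +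
          (Pf (m + 1) (DD hΩ) q.1.1.2 (∑ k, A q.2.1 k * W k q.2.2)).1 (s, z) = 0 at h0
        simp only [vec]
        rw [eq_neg_of_add_eq_zero_left h0, smul_neg, norm_neg]
      rw [e, hvec W s, add_zero]
      refine (hvec (fun i j => ∑ k, A i k * W k j) s).le.trans ?_
      refine (ss_mat (ev_Ev (s, z)) hρ _ _ (DD_comm hΩ) (DD_leib hΩ) ν A W).trans ?_
      exact mul_le_mul_of_nonneg_right (hLa s hs z hz) (Finset.sum_nonneg fun i _ =>
        Finset.sum_nonneg fun j _ => ss_nonneg (ev_Ev (s, z)) hρ _ _ _ _)) t ht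
  rwa [hvec, gronwallBound_ε0, sub_zero] at hg

end gron

end TG

/-- The Cauchy–Grönwall estimate from the proof of Lemma 4.2: if
`∂_t w = -a w` on `[0, T] × V`, `S_∞[a] ≤ L` on `[0, T] × V`, and `S_∞[w](0, ·) ≤ M` on
`V`, then `S_ν[w](t, z) ≤ M e^{L t}` for every `ν`, hence also `S_∞[w](t, z) ≤ M e^{L t}`. -/
theorem taylorMajorant_gronwall_estimate
    (N m : ℕ) (hN : 1 ≤ N) (hm : 1 ≤ m)
    (T ρ : ℝ) (hT : 0 < T) (hρ : 0 < ρ)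
    (V : Set (Fin m → ℝ)) (hV : IsOpen V)
    (Ω : Set (ℝ × (Fin m → ℝ))) (hΩ : IsOpen Ω)
    (hsub : Set.Icc (0 : ℝ) T ×ˢ V ⊆ Ω)
    (a w : ℝ × (Fin m → ℝ) → Matrix (Fin N) (Fin N) ℂ)
    (ha : ContDiffOn ℝ (⊤ : ℕ∞) a Ω)
    (hw : ContDiffOn ℝ (⊤ : ℕ∞) w Ω)
    (htransport : ∀ t ∈ Set.Icc (0 : ℝ) T, ∀ z ∈ V,
      HasDerivAt (fun s : ℝ => w (s, z)) (-(a (t, z) * w (t, z))) t)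
    (L M : ℝ) (hL : 0 ≤ L) (hM : 0 ≤ M)
    (hLa : ∀ ν : ℕ, ∀ t ∈ Set.Icc (0 : ℝ) T, ∀ z ∈ V, taylorMajorant ρ ν a (t, z) ≤ L)
    (hMw : ∀ ν : ℕ, ∀ z ∈ V, taylorMajorant ρ ν w (0, z) ≤ M) :
    ∀ ν : ℕ, ∀ t ∈ Set.Icc (0 : ℝ) T, ∀ z ∈ V,
      taylorMajorant ρ ν w (t, z) ≤ M * Real.exp (L * t) := by
  have hsm : ∀ u : ℝ × (Fin m → ℝ) → Matrix (Fin N) (Fin N) ℂ, ContDiffOn ℝ (⊤ : ℕ∞) u Ω →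
      ∀ i j, ContDiffOn ℝ (⊤ : ℕ∞) (fun y => u y i j) Ω := fun u hu i j =>
    (LinearMap.toContinuousLinearMap (Matrix.entryLinearMap ℝ ℂ i j)).contDiff.comp_contDiffOn hu
  let A : Fin N → Fin N → TG.CC Ω := fun i j => TG.mk _ (hsm a ha i j)
  let W : Fin N → Fin N → TG.CC Ω := fun i j => TG.mk _ (hsm w hw i j)
  have hA : ∀ i j, Set.EqOn (fun y => a y i j) (A i j).1 Ω := fun i j => TG.mk_eqOn _ _
  have hW : ∀ i j, Set.EqOn (fun y => w y i j) (W i j).1 Ω := fun i j => TG.mk_eqOn _ _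
  intro ν t ht z hz
  rw [TG.taylor_eq hΩ ρ ν w W hW (hsub ⟨ht, hz⟩)]
  refine TG.main hΩ hT hρ hV hsub A W ?_ L M ν ?_ ?_ t ht z hz
  · intro t ht z hz i j
    have hx : (t, z) ∈ Ω := hsub ⟨ht, hz⟩
    have h1 := TG.pdt_eqOn hΩ (hW i j) hx
    have h2 : HasDerivAt (fun s : ℝ => w (s, z) i j) ((-(a (t, z) * w (t, z))) i j) t :=
      (LinearMap.toContinuousLinearMap
        (Matrix.entryLinearMap ℝ ℂ i j)).hasFDerivAt.comp_hasDerivAt t (htransport t ht z hz)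
    have h3 : (∑ k, A i k * W k j : TG.CC Ω).1 (t, z) = (a (t, z) * w (t, z)) i j := by
      rw [Matrix.mul_apply]
      have : (∑ k, A i k * W k j : TG.CC Ω).1 = ∑ k, (A i k).1 * (W k j).1 := by
        exact map_sum (NonUnitalSubalgebraClass.subtype (TG.CC Ω)) _ _
      rw [this, Finset.sum_apply]
      exact Finset.sum_congr rfl fun k _ => by
        rw [Pi.mul_apply, ← hA i k hx, ← hW k j hx]
    change (TG.dd hΩ (1, 0) (W i j)).1 (t, z) + (∑ k, A i k * W k j : TG.CC Ω).1 (t, z) = 0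
    rw [h3, ← h1]
    unfold pdt
    dsimp only
    rw [h2.deriv, Matrix.neg_apply, neg_add_cancel]
  · intro t ht z hz
    rw [← TG.taylor_eq hΩ ρ ν a A hA (hsub ⟨ht, hz⟩)]
    exact hLa ν t ht z hz
  · intro z hz
    rw [← TG.taylor_eq hΩ ρ ν w W hW (hsub ⟨⟨le_rfl, hT.le⟩, hz⟩)]
    exact hMw ν z hz
end

section
/- Let N ≥ 1. Let W : ℝ² × ℝ² × ℝ² → Matrix (Fin N) (Fin N) ℂ be real-analytic and such that W(p, v, x) is an invertible matrix for every p, x ∈ ℝ² and every unit vector v ∈ ℝ². Let f : ℝ² → ℂ^N be continuous with support contained in the closed unit disk {x ∈ ℝ² : |x| ≤ 1}. Suppose that for every unit vector v ∈ ℝ² and every p ∈ ℝ² with ⟪p, v⟫ = 0 one has ∫_ℝ W(p, v, p + t v) · f(p + t v) dt = 0. Then f = 0. -/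
open Matrix MeasureTheory
open scoped RealInnerProductSpace

attribute [local instance] Matrix.normedAddCommGroup Matrix.normedSpace

namespace XR

lemma nat_mul_pow_le (x η : ℝ) (hx : 0 ≤ x) (hη : 0 ≤ η) (n : ℕ) :
    (n : ℝ) * x ^ (n - 1) * η ≤ (x + η) ^ n := by
  have key : ∀ n : ℕ, x ^ (n+1) + ((n+1 : ℕ) : ℝ) * x ^ n * η ≤ (x + η) ^ (n+1) := by
    intro n
    induction n with
    | zero => simp
    | succ n ih =>
      have h1 : (x ^ (n+1) + ((n+1 : ℕ) : ℝ) * x ^ n * η) * (x + η) ≤ (x + η) ^ (n+1) * (x + η) :=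
        mul_le_mul_of_nonneg_right ih (by positivity)
      have h2 : 0 ≤ ((n+1 : ℕ) : ℝ) * x ^ n * η * η := by positivity
      push_cast at *
      rw [pow_succ (x+η) (n+1)]
      refine le_trans ?_ h1
      ring_nf at *
      nlinarith
  cases n with
  | zero => simp
  | succ n =>
    have := key n
    have h2 : 0 ≤ x ^ (n+1) := by positivity
    simp only [Nat.add_sub_cancel]
    linarith

lemma coef_bound (κ x η : ℝ) (hκ : 0 ≤ κ) (hx : 0 ≤ x) (hη : 0 < η) (i j : ℕ) :
    κ * i * x ^ (i - 1 + j) + j * x ^ (i + (j - 1)) ≤ (1 + κ) * ((x + η) ^ (i + j) / η) := by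
  have h1 : (i : ℝ) * x ^ (i - 1 + j) ≤ (i + j : ℕ) * x ^ (i + j - 1) := by
    rcases i with _ | i
    · simp; positivity
    · have : i + 1 - 1 + j = i + 1 + j - 1 := by omega
      rw [this]
      exact mul_le_mul_of_nonneg_right (by exact_mod_cast (by omega)) (by positivity)
  have h2 : (j : ℝ) * x ^ (i + (j - 1)) ≤ (i + j : ℕ) * x ^ (i + j - 1) := by
    rcases j with _ | j
    · simp; positivity
    · have : i + (j + 1 - 1) = i + (j + 1) - 1 := by omega
      rw [this]
      exact mul_le_mul_of_nonneg_right (by exact_mod_cast (by omega)) (by positivity)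
  have h3 := nat_mul_pow_le x η hx hη.le (i + j)
  have h4 : ((i + j : ℕ) : ℝ) * x ^ (i + j - 1) ≤ (x + η) ^ (i + j) / η := by
    rw [le_div_iff₀ hη]; exact h3
  nlinarith [mul_le_mul_of_nonneg_left h1 hκ, mul_le_mul_of_nonneg_left h4 hκ]

theorem moments_vanish {V : Type*} [NormedAddCommGroup V] [NormedSpace ℝ V]
    {ι : Type*} (m : ℕ → ℕ → ℝ → V) (κ δ K R' R : ℝ) (hκ : 0 ≤ κ) (hδ : 0 < δ) (hK : 0 ≤ K)
    (hR' : 0 < R') (hR : R' < R)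
    (d : ι → ℝ) (p q : ι → ℕ) (hd : ∀ n, 0 ≤ d n) (hp : ∀ n, 1 ≤ p n)
    (hsum : Summable fun n => d n * R ^ (p n + q n))
    (h0 : ∀ i j h, 0 ≤ h → h ≤ δ → ‖m i j h‖ ≤ K * R' ^ (i + j))
    (h1 : ∀ i j h, 0 ≤ h → h ≤ δ → m (i+1) j h =
      ∫ s in (0:ℝ)..h, ((κ * i) • m (i - 1) j s - (j : ℝ) • m i (j - 1) s))
    (h2 : ∀ j h, 0 ≤ h → h ≤ δ → ‖m 0 j h‖ ≤ ∑' n, d n * ‖m (p n) (q n + j) h‖) :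
    ∃ δ' > 0, ∀ h, 0 ≤ h → h ≤ δ' → ∀ i j, m i j h = 0 := by
  set Q := ∑' n, d n * R ^ (p n + q n) with hQ
  have hRpos : 0 < R := hR'.trans hR
  have hQ0 : 0 ≤ Q := tsum_nonneg fun n => mul_nonneg (hd n) (by positivity)
  obtain ⟨C1, hC1⟩ : ∃ c, c = (1 + κ) / R' := ⟨_, rfl⟩
  have hC10 : 0 < C1 := by rw [hC1]; positivity
  obtain ⟨C, hC⟩ : ∃ c, c = C1 * (1 + Q) := ⟨_, rfl⟩
  have hC0 : 0 < C := by rw [hC]; positivity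
  have main : ∀ n : ℕ, ∀ η > 0, R' + n * η ≤ R → ∀ h, 0 ≤ h → h ≤ δ → ∀ i j,
      ‖m i j h‖ ≤ K * (R' + n * η) ^ (i + j) * ((C * h / η) ^ n / n.factorial) := by
    intro n
    induction n with
    | zero => intro η hη _ h hh hhδ i j; simpa using h0 i j h hh hhδ
    | succ n ih =>
      intro η hη hle h hh hhδ
      set x := R' + n * η with hx
      have hx0 : 0 < x := by positivity
      have hσ : R' + ((n + 1 : ℕ) : ℝ) * η = x + η := by rw [hx]; push_cast; ring
      rw [hσ] at hle ⊢
      have ih' := ih η hη (by linarith)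
      -- the case of positive first index
      set B := C1 * (C ^ n * (h / η) ^ (n + 1) / (n + 1).factorial) with hB
      have hB0 : 0 ≤ B := by positivity
      have step : ∀ i j, ‖m (i+1) j h‖ ≤ K * (x + η) ^ (i + 1 + j) * B := by
        intro i j
        rw [h1 i j h hh hhδ]
        have hb : ∀ s ∈ Set.Ioc (0:ℝ) h, ‖(κ * i) • m (i - 1) j s - (j : ℝ) • m i (j - 1) s‖ ≤
            (K * ((1 + κ) * ((x + η) ^ (i + j) / η)) * ((C / η) ^ n / n.factorial)) * s ^ n := by
          intro s hs
          have a1 := ih' s hs.1.le (hs.2.trans hhδ) (i - 1) j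
          have a2 := ih' s hs.1.le (hs.2.trans hhδ) i (j - 1)
          have a3 := coef_bound κ x η hκ hx0.le hη i j
          set T := (C * s / η) ^ n / n.factorial with hT
          have hs0 := hs.1.le
          have hT0 : 0 ≤ T := by positivity
          have hT' : ((C / η) ^ n / n.factorial) * s ^ n = T := by
            rw [hT, mul_div_right_comm C s, mul_pow]; ring
          calc ‖(κ * i) • m (i - 1) j s - (j : ℝ) • m i (j - 1) s‖
              ≤ ‖(κ * i) • m (i - 1) j s‖ + ‖(j : ℝ) • m i (j - 1) s‖ := norm_sub_le _ _
            _ = κ * i * ‖m (i - 1) j s‖ + j * ‖m i (j - 1) s‖ := by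
                rw [norm_smul, norm_smul, Real.norm_of_nonneg (by positivity),
                  Real.norm_of_nonneg (by positivity)]
            _ ≤ κ * i * (K * x ^ (i - 1 + j) * T) + j * (K * x ^ (i + (j - 1)) * T) := by
                gcongr
            _ = K * (κ * i * x ^ (i - 1 + j) + j * x ^ (i + (j - 1))) * T := by ring
            _ ≤ K * ((1 + κ) * ((x + η) ^ (i + j) / η)) * T := by gcongr
            _ = _ := by rw [← hT']; ring
        refine (intervalIntegral.norm_integral_le_of_norm_le hh
          (Filter.Eventually.of_forall fun s => hb s)
          ((continuous_const.mul (continuous_pow n)).intervalIntegrable _ _)).trans ?_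
        rw [intervalIntegral.integral_const_mul, integral_pow]
        have e1 : K * ((1 + κ) * ((x + η) ^ (i + j) / η)) * ((C / η) ^ n / n.factorial) *
            ((h ^ (n + 1) - 0 ^ (n + 1)) / ((n : ℝ) + 1)) =
            K * (R' * (x + η) ^ (i + j)) * B := by
          rw [hB, hC1, Nat.factorial_succ, div_pow, div_pow]
          push_cast
          field_simp
          ring
        rw [e1]
        have e2 : R' * (x + η) ^ (i + j) ≤ (x + η) ^ (i + 1 + j) := by
          have : i + 1 + j = (i + j) + 1 := by ring
          rw [this, pow_succ, mul_comm]
          have : R' ≤ x + η := by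
            have : 0 ≤ (n : ℝ) * η := by positivity
            rw [hx]; linarith
          gcongr
        gcongr
      have hBC : (1 + Q) * B = (C * h / η) ^ (n + 1) / (n + 1).factorial := by
        rw [hB, mul_div_assoc C, mul_pow C, pow_succ C]
        nth_rewrite 3 [hC]
        ring
      rw [← hBC]
      intro i j
      rcases i with _ | i
      · have hbd : ∀ k, d k * ‖m (p k) (q k + j) h‖ ≤
            (d k * R ^ (p k + q k)) * (K * (x + η) ^ j * B) := by
          intro k
          obtain ⟨p', hp'⟩ : ∃ p', p k = p' + 1 := ⟨p k - 1, by have := hp k; omega⟩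
          have := step p' (q k + j)
          rw [← hp'] at this
          calc d k * ‖m (p k) (q k + j) h‖ ≤ d k * (K * (x + η) ^ (p k + (q k + j)) * B) := by
                gcongr; exact hd k
            _ = (d k * (x + η) ^ (p k + q k)) * (K * (x + η) ^ j * B) := by ring
            _ ≤ _ := by gcongr; exact hd k
        have hs2 := hsum.mul_right (K * (x + η) ^ j * B)
        have hs1 : Summable fun k => d k * ‖m (p k) (q k + j) h‖ :=
          hs2.of_nonneg_of_le (fun k => mul_nonneg (hd k) (norm_nonneg _)) hbd
        refine (h2 j h hh hhδ).trans ((hs1.tsum_le_tsum hbd hs2).trans ?_)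
        rw [tsum_mul_right, ← hQ, zero_add]
        have : 0 ≤ K * (x + η) ^ j * B := by positivity
        nlinarith
      · refine (step i j).trans ?_
        have : 0 ≤ K * (x + η) ^ (i + 1 + j) * B := by positivity
        nlinarith
  set E := C * Real.exp 1 / (R - R') with hE
  have hRR : 0 < R - R' := by linarith
  have hE0 : 0 < E := by positivity
  refine ⟨min δ (1 / (2 * E)), by positivity, ?_⟩
  intro h hh hle i j
  have hlim : Filter.Tendsto (fun n : ℕ => K * R ^ (i + j) * (1 / 2 : ℝ) ^ n) Filter.atTop (nhds 0) := by
    simpa using (tendsto_pow_atTop_nhds_zero_of_lt_one (r := (1/2 : ℝ)) (by norm_num)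
      (by norm_num)).const_mul (K * R ^ (i + j))
  have hbd : ∀ᶠ n : ℕ in Filter.atTop, ‖m i j h‖ ≤ K * R ^ (i + j) * (1 / 2 : ℝ) ^ n := by
    filter_upwards [Filter.eventually_gt_atTop 0] with n hn
    have hn0 : (0 : ℝ) < n := by exact_mod_cast hn
    have := main n ((R - R') / n) (by positivity) (by field_simp; linarith) h hh
      (hle.trans (min_le_left _ _)) i j
    have e : R' + n * ((R - R') / n) = R := by field_simp; ring
    rw [e] at this
    refine this.trans ?_
    have h3 : (n : ℝ) ^ n / n.factorial ≤ Real.exp 1 ^ n := by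
      have := Real.pow_div_factorial_le_exp (n : ℝ) (by positivity) n
      rwa [← Real.exp_nat_mul, mul_one]
    have h4 : E * h ≤ 1 / 2 := by
      have := hle.trans (min_le_right _ _)
      calc E * h ≤ E * (1 / (2 * E)) := by gcongr
        _ = 1 / 2 := by field_simp
    have h5 : (C * h / ((R - R') / n)) ^ n / n.factorial ≤ (1 / 2 : ℝ) ^ n := by
      calc (C * h / ((R - R') / n)) ^ n / n.factorial
          = (C * h / (R - R')) ^ n * ((n : ℝ) ^ n / n.factorial) := by
            rw [← mul_div_assoc, ← mul_pow]; congr 2; field_simp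
        _ ≤ (C * h / (R - R')) ^ n * Real.exp 1 ^ n := by gcongr
        _ = (E * h) ^ n := by rw [← mul_pow, hE]; congr 1; ring
        _ ≤ _ := by gcongr
    gcongr
  have := ge_of_tendsto hlim hbd
  exact norm_le_zero_iff.mp this

end XR
namespace XR

set_option linter.unusedSectionVars false
set_option linter.unusedVariables false
variable {V : Type*} [NormedAddCommGroup V] [NormedSpace ℝ V]

noncomputable def phi (κ : ℝ) (g : ℝ → ℝ → V) (h X a : ℝ) : V :=
  g X (h - κ * a ^ 2 / 2 + a * X)

noncomputable def mom (κ : ℝ) (g : ℝ → ℝ → V) (i j : ℕ) (h : ℝ) : V :=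
  ∫ X in (-1:ℝ)..1, ∫ a in (-1:ℝ)..1, ((X - κ * a) ^ i * a ^ j) • phi κ g h X a

lemma phi_supp {κ : ℝ} (hκ : 0 < κ) {g : ℝ → ℝ → V}
    (hg : ∀ X Y, g X Y ≠ 0 → X ^ 2 ≤ κ * Y) {h X a : ℝ} (hne : phi κ g h X a ≠ 0) :
    X ^ 2 ≤ 2 * κ * h ∧ κ * a ^ 2 ≤ 4 * h := by
  have := hg _ _ hne
  constructor
  · nlinarith [sq_nonneg (X - κ * a)]
  · have h1 : κ * (κ * a ^ 2) ≤ κ * (4 * h) := by nlinarith [sq_nonneg (2 * X - κ * a)]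
    exact le_of_mul_le_mul_left h1 hκ

lemma phi_cont (κ : ℝ) {g : ℝ → ℝ → V} (hgc : Continuous (Function.uncurry g)) :
    Continuous (fun z : ℝ × ℝ × ℝ => phi κ g z.1 z.2.1 z.2.2) := by
  unfold phi
  exact hgc.comp (f := fun z : ℝ × ℝ × ℝ =>
    (z.2.1, z.1 - κ * z.2.2 ^ 2 / 2 + z.2.2 * z.2.1)) (by fun_prop)

lemma phi_cont' {T : Type*} [TopologicalSpace T] (κ : ℝ) {g : ℝ → ℝ → V}
    (hgc : Continuous (Function.uncurry g)) {u v w : T → ℝ} (hu : Continuous u) (hv : Continuous v)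
    (hw : Continuous w) : Continuous (fun z => phi κ g (u z) (v z) (w z)) :=
  (phi_cont κ hgc).comp (hu.prodMk (hv.prodMk hw))

lemma cpi {T : Type*} [TopologicalSpace T] [FirstCountableTopology T]
    {F : T → ℝ → V} (hF : Continuous (Function.uncurry F)) (a b : ℝ) :
    Continuous fun x => ∫ t in a..b, F x t :=
  intervalIntegral.continuous_parametric_intervalIntegral_of_continuous' hF a b

lemma swap2 [CompleteSpace V] {F : ℝ → ℝ → V} (hF : Continuous (Function.uncurry F)) (a b c d : ℝ) :
    ∫ x in a..b, ∫ y in c..d, F x y = ∫ y in c..d, ∫ x in a..b, F x y := by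
  apply intervalIntegral_intervalIntegral_swap
  exact (hF.continuousOn.integrableOn_compact (isCompact_uIcc.prod isCompact_uIcc)).mono_set
    (Set.prod_mono Set.uIoc_subset_uIcc Set.uIoc_subset_uIcc)

lemma ibp [CompleteSpace V] {κ : ℝ} (hκ : 0 < κ) {g : ℝ → ℝ → V}
    (hgc : Continuous (Function.uncurry g))
    (hg : ∀ X Y, g X Y ≠ 0 → X ^ 2 ≤ κ * Y) (i j : ℕ) (h : ℝ) (hh : 0 ≤ h) (hh' : 4 * h < κ)
    (X : ℝ) :
    ∫ a in (-1:ℝ)..1, ((X - κ * a) ^ (i+1) * a ^ j) • phi κ g h X a =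
    ∫ a in (-1:ℝ)..1, ∫ s in (0:ℝ)..h,
      (κ * i * ((X - κ * a) ^ (i-1) * a ^ j) - j * ((X - κ * a) ^ i * a ^ (j-1))) •
        phi κ g s X a := by
  have hgX : Continuous (g X) := hgc.comp (f := fun Y => (X, Y)) (by fun_prop)
  set θ : ℝ → ℝ := fun a => - κ * a ^ 2 / 2 + a * X with hθ
  have hθd : ∀ a, HasDerivAt θ (X - κ * a) a := by
    intro a
    have h1 : HasDerivAt (fun a : ℝ => - κ * a ^ 2 / 2 + a * X)
      (- κ * (2 * a ^ (2-1) * 1) / 2 + 1 * X) a :=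
      ((((hasDerivAt_id a).pow 2).const_mul (-κ)).div_const 2).add ((hasDerivAt_id a).mul_const X)
    convert! h1 using 1
    simp; ring
  have hφ : ∀ s a, phi κ g s X a = g X (s + θ a) := by
    intro s a; simp only [phi, hθ]; congr 1; ring
  set G : ℝ → V := fun Y => ∫ y in (0:ℝ)..Y, g X y with hG
  have hGd : ∀ Y, HasDerivAt G (g X Y) Y := fun Y =>
    (hgX.integral_hasStrictDerivAt 0 Y).hasDerivAt
  set H : ℝ → V := fun a => ∫ s in (0:ℝ)..h, phi κ g s X a with hH
  have hHG : ∀ a, H a = G (h + θ a) - G (θ a) := by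
    intro a
    simp only [hH, hG, hφ]
    rw [intervalIntegral.integral_comp_add_right (fun y => g X y) (θ a), zero_add,
      intervalIntegral.integral_interval_sub_left (hgX.intervalIntegrable _ _)
        (hgX.intervalIntegrable _ _)]
  have hHd : ∀ a, HasDerivAt H ((X - κ * a) • (phi κ g h X a - phi κ g 0 X a)) a := by
    intro a
    have e : H = fun a => G (h + θ a) - G (θ a) := funext hHG
    rw [e, hφ, hφ, zero_add, smul_sub]
    exact ((hGd _).scomp a ((hθd a).const_add h)).sub ((hGd _).scomp a (hθd a))
  have hPd : ∀ a, HasDerivAt (fun a : ℝ => (X - κ * a) ^ i * a ^ j)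
      (-(κ * i * ((X - κ * a) ^ (i-1) * a ^ j) - j * ((X - κ * a) ^ i * a ^ (j-1)))) a := by
    intro a
    have h1 : HasDerivAt (fun a : ℝ => X - κ * a) (-(κ * 1)) a :=
      ((hasDerivAt_id a).const_mul κ).const_sub X
    convert! (h1.pow i).mul ((hasDerivAt_id a).pow j) using 1
    simp; ring
  have hH0 : ∀ a, a ^ 2 = 1 → H a = 0 := by
    intro a ha
    simp only [hH]
    rw [intervalIntegral.integral_congr (g := fun _ => (0 : V)), intervalIntegral.integral_zero]
    intro s hs
    rw [Set.uIcc_of_le hh] at hs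
    by_contra hne
    have := (phi_supp hκ hg hne).2
    rw [ha] at this
    linarith [hs.2]
  have hphi0 : ∀ a, (X - κ * a) • phi κ g 0 X a = 0 := by
    intro a
    by_cases hne : phi κ g 0 X a = 0
    · simp [hne]
    · obtain ⟨h1, h2⟩ := phi_supp hκ hg hne
      have hX : X = 0 := by nlinarith
      have ha : a ^ 2 ≤ 0 := by
        by_contra hc; push Not at hc; nlinarith [mul_pos hκ hc]
      have ha : a = 0 := by nlinarith
      simp [hX, ha]
  have key := intervalIntegral.integral_smul_deriv_eq_deriv_smul (a := -1) (b := 1)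
    (u := fun a : ℝ => (X - κ * a) ^ i * a ^ j) (v := H) (fun a _ => hPd a) (fun a _ => hHd a)
    ((by fun_prop : Continuous _).intervalIntegrable _ _)
    ((((by fun_prop : Continuous fun a : ℝ => X - κ * a)).smul
      ((phi_cont' κ hgc continuous_const continuous_const continuous_id).sub
        (phi_cont' κ hgc continuous_const continuous_const continuous_id))).intervalIntegrable _ _)
  rw [hH0 1 (by norm_num), hH0 (-1) (by norm_num), smul_zero, smul_zero, sub_zero, zero_sub,
    ← intervalIntegral.integral_neg] at key
  calc _ = ∫ a in (-1:ℝ)..1, ((X - κ * a) ^ i * a ^ j) •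
        ((X - κ * a) • (phi κ g h X a - phi κ g 0 X a)) := by
        congr 1; ext a
        rw [smul_sub, hphi0, sub_zero, smul_smul]; congr 1; ring
    _ = _ := key
    _ = _ := by
        congr 1; ext a
        rw [intervalIntegral.integral_smul, ← neg_smul, neg_neg]

lemma mom_rec [CompleteSpace V] {κ : ℝ} (hκ : 0 < κ) {g : ℝ → ℝ → V}
    (hgc : Continuous (Function.uncurry g))
    (hg : ∀ X Y, g X Y ≠ 0 → X ^ 2 ≤ κ * Y) (i j : ℕ) (h : ℝ) (hh : 0 ≤ h) (hh' : 4 * h < κ) :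
    mom κ g (i+1) j h =
      ∫ s in (0:ℝ)..h, ((κ * i) • mom κ g (i - 1) j s - (j : ℝ) • mom κ g i (j - 1) s) := by
  set Q : ℝ → ℝ → ℝ := fun X a =>
    (κ * i * ((X - κ * a) ^ (i-1) * a ^ j) - j * ((X - κ * a) ^ i * a ^ (j-1))) with hQ
  have hQc : Continuous (Function.uncurry Q) := by simp only [hQ]; unfold Function.uncurry; fun_prop
  have hc : ∀ i j : ℕ, ∀ s, Continuous (Function.uncurry fun X a : ℝ =>
      ((X - κ * a) ^ i * a ^ j) • phi κ g s X a) := by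
    intro i j s
    unfold Function.uncurry
    exact (by fun_prop : Continuous fun z : ℝ × ℝ => ((z.1 - κ * z.2) ^ i * z.2 ^ j)).smul
      (phi_cont' κ hgc continuous_const continuous_fst continuous_snd)
  have e1 : ∀ s, (κ * i) • mom κ g (i - 1) j s - (j : ℝ) • mom κ g i (j - 1) s =
      ∫ X in (-1:ℝ)..1, ∫ a in (-1:ℝ)..1, Q X a • phi κ g s X a := by
    intro s
    unfold mom
    rw [← intervalIntegral.integral_smul, ← intervalIntegral.integral_smul,
      ← intervalIntegral.integral_sub]
    · congr 1; ext X
      rw [← intervalIntegral.integral_smul, ← intervalIntegral.integral_smul,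
        ← intervalIntegral.integral_sub]
      · congr 1; ext a
        simp only [hQ]
        rw [smul_smul, smul_smul, ← sub_smul]
      · exact (((hc (i-1) j s).comp (Continuous.prodMk_right X)).const_smul _).intervalIntegrable _ _
      · exact (((hc i (j-1) s).comp (Continuous.prodMk_right X)).const_smul _).intervalIntegrable _ _
    · exact ((cpi (hc (i-1) j s) (-1) 1).const_smul _).intervalIntegrable _ _
    · exact ((cpi (hc i (j-1) s) (-1) 1).const_smul _).intervalIntegrable _ _
  simp only [e1]
  have hc3 : Continuous fun z : ℝ × ℝ × ℝ => Q z.2.1 z.2.2 • phi κ g z.1 z.2.1 z.2.2 :=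
    (hQc.comp continuous_snd).smul (phi_cont κ hgc)
  rw [swap2 (F := fun s X => ∫ a in (-1:ℝ)..1, Q X a • phi κ g s X a)]
  · unfold mom
    congr 1; ext X
    rw [ibp hκ hgc hg i j h hh hh' X, swap2]
    exact hc3.comp (f := fun z : ℝ × ℝ => (z.2, X, z.1)) (by fun_prop)
  · exact cpi (T := ℝ × ℝ) (F := fun z a => Q z.2 a • phi κ g z.1 z.2 a)
      (hc3.comp (f := fun z : (ℝ × ℝ) × ℝ => (z.1.1, z.1.2, z.2)) (by fun_prop)) _ _

lemma mom_base {κ : ℝ} (hκ : 0 < κ) {g : ℝ → ℝ → V}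
    (hg : ∀ X Y, g X Y ≠ 0 → X ^ 2 ≤ κ * Y) (M : ℝ) (hM : ∀ X Y, ‖g X Y‖ ≤ M) (R h : ℝ)
    (hR : 0 ≤ R)
    (hb : ∀ X a, phi κ g h X a ≠ 0 → |X - κ * a| ≤ R ∧ |a| ≤ R) (i j : ℕ) :
    ‖mom κ g i j h‖ ≤ (4 * M) * R ^ (i + j) := by
  have hM0 : 0 ≤ M := (norm_nonneg _).trans (hM 0 0)
  have h1 : ∀ X a : ℝ, ‖((X - κ * a) ^ i * a ^ j) • phi κ g h X a‖ ≤ M * R ^ (i + j) := by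
    intro X a
    by_cases hne : phi κ g h X a = 0
    · rw [hne, smul_zero, norm_zero]; positivity
    · obtain ⟨h1, h2⟩ := hb X a hne
      rw [norm_smul, norm_mul, norm_pow, norm_pow, Real.norm_eq_abs, Real.norm_eq_abs, pow_add,
        mul_comm]
      have := hM X (h - κ * a ^ 2 / 2 + a * X)
      unfold phi
      gcongr
  have h2 : ∀ X : ℝ, ‖∫ a in (-1:ℝ)..1, ((X - κ * a) ^ i * a ^ j) • phi κ g h X a‖ ≤
      M * R ^ (i + j) * |1 - (-1)| := fun X =>
    intervalIntegral.norm_integral_le_of_norm_le_const fun a _ => h1 X a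
  refine (intervalIntegral.norm_integral_le_of_norm_le_const fun X _ => h2 X).trans ?_
  rw [show |(1:ℝ) - (-1)| = 2 by norm_num]
  apply le_of_eq; ring

end XR
namespace XR

lemma real_moments {G : ℝ → ℝ} (hG : Continuous G) (c : ℝ)
    (h : ∀ n : ℕ, ∫ x in (-1:ℝ)..1, (x - c) ^ n * G x = 0) :
    ∀ x ∈ Set.Icc (-1:ℝ) 1, G x = 0 := by
  have hp : ∀ p : Polynomial ℝ, ∫ x in (-1:ℝ)..1, p.eval (x - c) * G x = 0 := by
    intro p
    induction p using Polynomial.induction_on' with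
    | add p q hp hq =>
      simp only [Polynomial.eval_add, add_mul]
      rw [intervalIntegral.integral_add, hp, hq, add_zero]
      · exact ((p.continuous.comp (by fun_prop : Continuous fun x : ℝ => x - c)).mul
          hG).intervalIntegrable _ _
      · exact ((q.continuous.comp (by fun_prop : Continuous fun x : ℝ => x - c)).mul
          hG).intervalIntegrable _ _
    | monomial n a =>
      simp only [Polynomial.eval_monomial, mul_assoc]
      rw [intervalIntegral.integral_const_mul, h, mul_zero]
  have hq : ∀ q : Polynomial ℝ, ∫ x in (-1:ℝ)..1, q.eval x * G x = 0 := by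
    intro q
    have := hp (q.comp (Polynomial.X + Polynomial.C c))
    simpa using this
  have hzero : ∫ x in (-1:ℝ)..1, G x * G x ≤ 0 := by
    set B := ∫ x in (-1:ℝ)..1, |G x| with hB
    have hB0 : 0 ≤ B := intervalIntegral.integral_nonneg (by norm_num) fun x _ => abs_nonneg _
    have : ∀ ε > 0, ∫ x in (-1:ℝ)..1, G x * G x ≤ ε * B := by
      intro ε hε
      obtain ⟨p, hp⟩ := exists_polynomial_near_of_continuousOn (-1) 1 G hG.continuousOn ε hε
      have e : ∫ x in (-1:ℝ)..1, G x * G x =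
          ∫ x in (-1:ℝ)..1, (G x * G x - p.eval x * G x) := by
        rw [intervalIntegral.integral_sub, hq p, sub_zero]
        · exact (hG.mul hG).intervalIntegrable _ _
        · exact (p.continuous.mul hG).intervalIntegrable _ _
      rw [e, hB, ← intervalIntegral.integral_const_mul]
      apply intervalIntegral.integral_mono_on (by norm_num)
      · exact ((hG.mul hG).sub (p.continuous.mul hG)).intervalIntegrable _ _
      · exact (continuous_const.mul hG.abs).intervalIntegrable _ _
      · intro x hx
        rw [← sub_mul]
        refine (le_abs_self _).trans ?_
        rw [abs_mul, abs_sub_comm]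
        gcongr
        exact (hp x hx).le
    by_contra hc
    push Not at hc
    have := this ((∫ x in (-1:ℝ)..1, G x * G x) / (2 * (B + 1))) (by positivity)
    rw [div_mul_eq_mul_div, le_div_iff₀ (by positivity)] at this
    nlinarith
  intro x hx
  by_contra hne
  have : 0 < ∫ x in (-1:ℝ)..1, G x * G x :=
    intervalIntegral.integral_pos (by norm_num) (hG.mul hG).continuousOn
      (fun y _ => mul_self_nonneg _) ⟨x, hx, mul_self_pos.mpr hne⟩
  linarith

set_option linter.unusedSectionVars false
variable {V : Type*} [NormedAddCommGroup V] [NormedSpace ℝ V] [CompleteSpace V]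

lemma vec_moments {G : ℝ → V} (hG : Continuous G) (c : ℝ)
    (h : ∀ n : ℕ, ∫ x in (-1:ℝ)..1, (x - c) ^ n • G x = 0) :
    ∀ x ∈ Set.Icc (-1:ℝ) 1, G x = 0 := by
  intro x hx
  apply SeparatingDual.eq_zero_of_forall_dual_eq_zero (R := ℝ)
  intro ℓ
  refine real_moments (G := fun x => ℓ (G x)) (ℓ.continuous.comp hG) c ?_ x hx
  intro n
  have := ℓ.intervalIntegral_comp_comm (μ := volume) (a := -1) (b := 1)
    (f := fun x => (x - c) ^ n • G x)
    (((by fun_prop : Continuous fun x : ℝ => (x - c) ^ n).smul hG).intervalIntegrable _ _)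
  rw [h n, map_zero] at this
  simpa using this

lemma mom_cont (κ : ℝ) {g : ℝ → ℝ → V} (hgc : Continuous (Function.uncurry g)) (i j : ℕ) (h : ℝ) :
    Continuous (Function.uncurry fun X a : ℝ => ((X - κ * a) ^ i * a ^ j) • phi κ g h X a) := by
  unfold Function.uncurry
  exact (by fun_prop : Continuous fun z : ℝ × ℝ => ((z.1 - κ * z.2) ^ i * z.2 ^ j)).smul
      (phi_cont' κ hgc continuous_const continuous_fst continuous_snd)

lemma phi_zero_of_mom {κ : ℝ} {g : ℝ → ℝ → V}
    (hgc : Continuous (Function.uncurry g)) (h : ℝ) (hm : ∀ i j, mom κ g i j h = 0) :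
    ∀ X ∈ Set.Icc (-1:ℝ) 1, ∀ a ∈ Set.Icc (-1:ℝ) 1, phi κ g h X a = 0 := by
  intro X hX a ha
  have h1 : ∀ i : ℕ, ∀ a ∈ Set.Icc (-1:ℝ) 1,
      ∫ X in (-1:ℝ)..1, (X - κ * a) ^ i • phi κ g h X a = 0 := by
    intro i
    have hc : Continuous (Function.uncurry fun a X : ℝ => (X - κ * a) ^ i • phi κ g h X a) := by
      have := (mom_cont κ hgc i 0 h).comp continuous_swap
      simp only [Function.comp_def, Function.uncurry, pow_zero, mul_one] at this
      exact this
    apply vec_moments (cpi hc _ _) 0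
    intro j
    have := hm i j
    unfold mom at this
    rw [swap2 (mom_cont κ hgc i j h)] at this
    rw [← this]
    congr 1; ext a
    rw [← intervalIntegral.integral_smul]
    congr 1; ext X
    rw [smul_smul, sub_zero, mul_comm]
  exact vec_moments (G := fun X => phi κ g h X a)
    (phi_cont' κ hgc continuous_const continuous_id continuous_const) (κ * a)
    (fun i => h1 i a ha) X hX

lemma mom_zero_bound {κ : ℝ} (hκ : 0 < κ) {g : ℝ → ℝ → V}
    (hgc : Continuous (Function.uncurry g))
    (hg : ∀ X Y, g X Y ≠ 0 → X ^ 2 ≤ κ * Y) (M : ℝ) (hM : ∀ X Y, ‖g X Y‖ ≤ M) (R h : ℝ)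
    (hR : 0 ≤ R)
    (hb : ∀ X a, phi κ g h X a ≠ 0 → |X - κ * a| ≤ R ∧ |a| ≤ R)
    {ι : Type*} [Countable ι] (c : ι → V →L[ℝ] V) (d : ι → ℝ) (p q : ι → ℕ)
    (hcd : ∀ n, ‖c n‖ ≤ d n) (hsum : Summable fun n => d n * R ^ (p n + q n))
    (u : ℝ → ℝ → V →L[ℝ] V)
    (hu : ∀ t a, |t| ≤ R → |a| ≤ R → HasSum (fun n => (t ^ p n * a ^ q n) • c n) (u t a - 1))
    (huc : ∀ a, Continuous fun X => u (X - κ * a) a (phi κ g h X a))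
    (hu0 : ∀ a ∈ Set.Icc (-1:ℝ) 1, ∫ X in (-1:ℝ)..1, u (X - κ * a) a (phi κ g h X a) = 0)
    (j : ℕ) :
    ‖mom κ g 0 j h‖ ≤ ∑' n, d n * ‖mom κ g (p n) (q n + j) h‖ := by
  have hM0 : 0 ≤ M := (norm_nonneg _).trans (hM 0 0)
  have hd : ∀ n, 0 ≤ d n := fun n => (norm_nonneg _).trans (hcd n)
  set F : ι → ℝ → ℝ → V := fun n a X =>
    c n (((X - κ * a) ^ p n * a ^ (q n + j)) • phi κ g h X a) with hF
  have hFc : ∀ n, Continuous (Function.uncurry (F n)) := fun n =>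
    (c n).continuous.comp ((mom_cont κ hgc (p n) (q n + j) h).comp continuous_swap)
  have hFb : ∀ n, ∀ a ∈ Set.Icc (-1:ℝ) 1, ∀ X, ‖F n a X‖ ≤ (d n * R ^ (p n + q n)) * M := by
    intro n a ha X
    have hdn := hd n
    by_cases hne : phi κ g h X a = 0
    · simp only [hF, hne, smul_zero, map_zero, norm_zero]; positivity
    · obtain ⟨h1, h2⟩ := hb X a hne
      refine ((c n).le_opNorm _).trans ?_
      rw [norm_smul, norm_mul, norm_pow, norm_pow, Real.norm_eq_abs, Real.norm_eq_abs, pow_add,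
        pow_add]
      have h3 : ‖phi κ g h X a‖ ≤ M := hM _ _
      have h4 : |a| ^ j ≤ 1 := pow_le_one₀ (abs_nonneg _) (abs_le.mpr ha)
      calc _ ≤ d n * (R ^ p n * (R ^ q n * 1) * M) := by
            have := hcd n
            gcongr
        _ = _ := by ring
  have hsum' := hsum.mul_right M
  have inner : ∀ a ∈ Set.Icc (-1:ℝ) 1, HasSum (fun n => ∫ X in (-1:ℝ)..1, F n a X)
      (- ∫ X in (-1:ℝ)..1, a ^ j • phi κ g h X a) := by
    intro a ha
    have hφc : Continuous fun X => phi κ g h X a :=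
      phi_cont' κ hgc continuous_const continuous_id continuous_const
    have e : - ∫ X in (-1:ℝ)..1, a ^ j • phi κ g h X a =
        ∫ X in (-1:ℝ)..1, a ^ j • (u (X - κ * a) a (phi κ g h X a) - phi κ g h X a) := by
      rw [intervalIntegral.integral_smul, intervalIntegral.integral_smul,
        intervalIntegral.integral_sub ((huc a).intervalIntegrable _ _)
        (hφc.intervalIntegrable _ _), hu0 a ha, zero_sub, smul_neg]
    rw [e]
    apply intervalIntegral.hasSum_integral_of_dominated_convergence
      (fun n _ => (d n * R ^ (p n + q n)) * M)
    · intro n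
      exact ((hFc n).comp (Continuous.prodMk_right a)).aestronglyMeasurable
    · intro n
      exact Filter.Eventually.of_forall fun X _ => hFb n a ha X
    · exact Filter.Eventually.of_forall fun X _ => hsum'
    · exact intervalIntegrable_const
    · refine Filter.Eventually.of_forall fun X _ => ?_
      by_cases hne : phi κ g h X a = 0
      · simp only [hF, hne, smul_zero, map_zero, sub_zero]; exact hasSum_zero
      · obtain ⟨h1, h2⟩ := hb X a hne
        have h3 := (hu _ _ h1 h2).mapL
          (ContinuousLinearMap.apply ℝ V (phi κ g h X a)) |>.const_smul (a ^ j)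
        convert! h3 using 1
        ext n
        simp only [hF, map_smul, ContinuousLinearMap.apply_apply, smul_smul]
        congr 1; ring
  have outer : HasSum (fun n => ∫ a in (-1:ℝ)..1, ∫ X in (-1:ℝ)..1, F n a X)
      (∫ a in (-1:ℝ)..1, - ∫ X in (-1:ℝ)..1, a ^ j • phi κ g h X a) := by
    have hI : ∀ a, a ∈ Set.uIoc (-1:ℝ) 1 → a ∈ Set.Icc (-1:ℝ) 1 := by
      intro a ha
      rw [Set.uIoc_of_le (by norm_num)] at ha
      exact ⟨ha.1.le, ha.2⟩
    apply intervalIntegral.hasSum_integral_of_dominated_convergence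
      (fun n _ => (d n * R ^ (p n + q n)) * M * |1 - (-1)|)
    · intro n
      exact (cpi (hFc n) _ _).aestronglyMeasurable
    · intro n
      exact Filter.Eventually.of_forall fun a ha =>
        intervalIntegral.norm_integral_le_of_norm_le_const fun X _ => hFb n a (hI a ha) X
    · exact Filter.Eventually.of_forall fun X _ => hsum'.mul_right _
    · exact intervalIntegrable_const
    · exact Filter.Eventually.of_forall fun a ha => inner a (hI a ha)
  have e0 : ∫ a in (-1:ℝ)..1, - ∫ X in (-1:ℝ)..1, a ^ j • phi κ g h X a = - mom κ g 0 j h := by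
    rw [intervalIntegral.integral_neg]
    unfold mom
    rw [swap2 (mom_cont κ hgc 0 j h)]
    simp
  have e1 : ∀ n, ∫ a in (-1:ℝ)..1, ∫ X in (-1:ℝ)..1, F n a X =
      c n (mom κ g (p n) (q n + j) h) := by
    intro n
    have hc := mom_cont κ hgc (p n) (q n + j) h
    unfold mom
    rw [swap2 hc, ← (c n).intervalIntegral_comp_comm]
    · congr 1; ext a
      rw [← (c n).intervalIntegral_comp_comm]
      exact (hc.comp (Continuous.prodMk_left a)).intervalIntegrable _ _
    · exact (cpi (F := fun a X => ((X - κ * a) ^ p n * a ^ (q n + j)) • phi κ g h X a)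
        (hc.comp continuous_swap) _ _).intervalIntegrable _ _
  rw [e0] at outer
  simp only [e1] at outer
  have hmb := mom_base hκ hg M hM R h hR hb
  have hs : Summable fun n => d n * ‖mom κ g (p n) (q n + j) h‖ := by
    refine (hsum.mul_right (4 * M * R ^ j)).of_nonneg_of_le
      (fun n => mul_nonneg (hd n) (norm_nonneg _)) fun n => ?_
    calc _ ≤ d n * (4 * M * R ^ (p n + (q n + j))) :=
          mul_le_mul_of_nonneg_left (hmb _ _) (hd n)
      _ = _ := by ring
  have := outer.norm_le_of_bounded hs.hasSum fun n =>
    ((c n).le_opNorm _).trans (mul_le_mul_of_nonneg_right (hcd n) (norm_nonneg _))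
  rwa [norm_neg] at this

end XR
namespace XR

lemma expand {E : Type*} [NormedAddCommGroup E] [NormedSpace ℝ E] [CompleteSpace E]
    {U : (Fin 3 → ℝ) → E} (hU : AnalyticAt ℝ U 0) :
    ∃ R : ℝ, 0 < R ∧ R ≤ 1 ∧ ∃ (c : (Σ n : ℕ, (Fin n → Fin 3)) → E)
      (e : (Σ n : ℕ, (Fin n → Fin 3)) → Fin 3 → ℕ),
      (Summable fun n => ‖c n‖ * R ^ (e n 0 + e n 1 + e n 2)) ∧
      ∀ z : Fin 3 → ℝ, (∀ i, |z i| ≤ R) →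
        HasSum (fun n => (z 0 ^ e n 0 * z 1 ^ e n 1 * z 2 ^ e n 2) • c n) (U z) := by
  obtain ⟨P, r, hP⟩ := hU
  obtain ⟨r', hr'0, hr'⟩ := ENNReal.lt_iff_exists_nnreal_btwn.mp hP.r_pos
  have hr'pos : (0 : ℝ) < r' := by exact_mod_cast hr'0
  set R : ℝ := min 1 (r' / 4) with hR
  have hR0 : 0 < R := by positivity
  have hR3 : 3 * R ≤ r' := by
    have : R ≤ r' / 4 := min_le_right _ _
    linarith
  set c : (Σ n : ℕ, (Fin n → Fin 3)) → E := fun x => P x.1 (fun k => Pi.single (x.2 k) 1) with hc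
  set e : (Σ n : ℕ, (Fin n → Fin 3)) → Fin 3 → ℕ := fun x i =>
    (Finset.univ.filter fun k => x.2 k = i).card with he
  have hprod : ∀ (x : Σ n : ℕ, (Fin n → Fin 3)) (z : Fin 3 → ℝ),
      z 0 ^ e x 0 * z 1 ^ e x 1 * z 2 ^ e x 2 = ∏ k, z (x.2 k) := by
    intro x z
    rw [← Finset.prod_fiberwise' Finset.univ x.2 z, Fin.prod_univ_three]
    simp [he]
  have hesum : ∀ x : (Σ n : ℕ, (Fin n → Fin 3)), R ^ (e x 0 + e x 1 + e x 2) = R ^ x.1 := by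
    intro x
    have := hprod x (fun _ => R)
    rw [pow_add, pow_add, this]; simp
  have hcn : ∀ x, ‖c x‖ ≤ ‖P x.1‖ := by
    intro x
    refine ((P x.1).le_opNorm _).trans ?_
    have : ∀ k, ‖(Pi.single (x.2 k) 1 : Fin 3 → ℝ)‖ = 1 := by
      intro k; rw [Pi.norm_single]; simp
    simp [this]
  have hsumm : Summable fun n => ‖c n‖ * R ^ (e n 0 + e n 1 + e n 2) := by
    simp only [hesum]
    have h1 : Summable fun x : (Σ n : ℕ, (Fin n → Fin 3)) => ‖P x.1‖ * R ^ x.1 := by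
      rw [summable_sigma_of_nonneg (fun x => by positivity)]
      refine ⟨fun n => Summable.of_finite, ?_⟩
      have h2 : Summable fun n : ℕ => ‖P n‖ * (r' : ℝ) ^ n :=
        P.summable_norm_mul_pow (hr'.trans_le hP.r_le)
      refine h2.of_nonneg_of_le (fun n => tsum_nonneg fun _ => by positivity) fun n => ?_
      rw [tsum_fintype]
      have h3 : ∑ _x : Fin n → Fin 3, ‖P n‖ * R ^ n = (3:ℝ) ^ n * (‖P n‖ * R ^ n) := by
        simp
      refine h3.le.trans ?_
      calc (3:ℝ) ^ n * (‖P n‖ * R ^ n) = ‖P n‖ * (3 * R) ^ n := by rw [mul_pow]; ring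
        _ ≤ ‖P n‖ * (r' : ℝ) ^ n := by gcongr
    exact h1.of_nonneg_of_le (fun x => by positivity) fun x => by
      have := hcn x
      gcongr
  refine ⟨R, hR0, min_le_left _ _, c, e, hsumm, ?_⟩
  intro z hz
  have hzb : z ∈ Metric.eball (0 : Fin 3 → ℝ) r := by
    rw [Metric.mem_eball, edist_zero_right]
    refine lt_of_le_of_lt ?_ hr'
    have : ‖z‖ ≤ r' := by
      rw [pi_norm_le_iff_of_nonneg hr'pos.le]
      intro i
      rw [Real.norm_eq_abs]
      linarith [hz i]
    rw [enorm_eq_nnnorm]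
    exact_mod_cast this
  have h1 := hP.hasSum hzb
  rw [zero_add] at h1
  refine HasSum.sigma_of_hasSum h1 ?_ ?_
  · intro n
    have e1 : P n (fun _ => z) = ∑ x : Fin n → Fin 3, (∏ k, z (x k)) • c ⟨n, x⟩ := by
      have e2 : (fun _ : Fin n => z) =
          fun _ : Fin n => ∑ i : Fin 3, z i • (Pi.single i 1 : Fin 3 → ℝ) := by
        ext k i
        simp [Finset.sum_apply, Pi.single_apply]
      rw [e2, ContinuousMultilinearMap.map_sum]
      refine Finset.sum_congr rfl fun x _ => ?_
      rw [ContinuousMultilinearMap.map_smul_univ]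
    rw [e1]
    simp only [hprod]
    exact hasSum_fintype _
  · refine Summable.of_norm_bounded hsumm fun x => ?_
    rw [norm_smul, norm_mul, norm_mul, norm_pow, norm_pow, norm_pow, mul_comm, pow_add, pow_add]
    have := hz 0
    have := hz 1
    have := hz 2
    simp only [Real.norm_eq_abs]
    gcongr
end XR
namespace XR

theorem local_vanish {V : Type*} [NormedAddCommGroup V] [NormedSpace ℝ V] [CompleteSpace V]
    {κ : ℝ} (hκ : 0 < κ) {g : ℝ → ℝ → V}
    (hgc : Continuous (Function.uncurry g))
    (hg : ∀ X Y, g X Y ≠ 0 → X ^ 2 ≤ κ * Y) (M : ℝ) (hM : ∀ X Y, ‖g X Y‖ ≤ M)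
    (U : (Fin 3 → ℝ) → (V →L[ℝ] V)) (hU : AnalyticAt ℝ U 0)
    (hU0 : ∀ a h : ℝ, U ![0, a, h] = 1)
    (huc : ∀ a h : ℝ, Continuous fun X => U ![X - κ * a, a, h] (phi κ g h X a))
    (hu0 : ∀ a h : ℝ, ∫ X : ℝ, U ![X - κ * a, a, h] (phi κ g h X a) = 0) :
    ∃ ε > 0, ∀ X Y : ℝ, |X| < ε → |Y| < ε → g X Y = 0 := by
  have hM0 : 0 ≤ M := (norm_nonneg _).trans (hM 0 0)
  obtain ⟨R, hR0, hR1, c, e, hsum, hexp⟩ := expand hU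
  set R' : ℝ := R / 2 with hR'
  have hR'0 : 0 < R' := by positivity
  have hR'R : R' < R := by rw [hR']; linarith
  set δ : ℝ := min (min (R' ^ 2 / (8 * κ)) (κ * (R' / (2 * (1 + κ))) ^ 2 / 4)) (min (κ / 8) R)
    with hδ
  have hδ0 : 0 < δ := by positivity
  have d1 : δ ≤ R' ^ 2 / (8 * κ) := (min_le_left _ _).trans (min_le_left _ _)
  have d2 : δ ≤ κ * (R' / (2 * (1 + κ))) ^ 2 / 4 := (min_le_left _ _).trans (min_le_right _ _)
  have d3 : δ ≤ κ / 8 := (min_le_right _ _).trans (min_le_left _ _)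
  have d4 : δ ≤ R := (min_le_right _ _).trans (min_le_right _ _)
  have hX : ∀ h X a, h ≤ δ → phi κ g h X a ≠ 0 → |X| ≤ R' / 2 ∧ |a| ≤ R' / (2 * (1 + κ)) := by
    intro h X a hh hne
    obtain ⟨h1, h2⟩ := phi_supp hκ hg hne
    constructor
    · apply abs_le_of_sq_le_sq _ (by positivity)
      have : h ≤ R' ^ 2 / (8 * κ) := hh.trans d1
      rw [le_div_iff₀ (by positivity)] at this
      nlinarith
    · apply abs_le_of_sq_le_sq _ (by positivity)
      have : h ≤ _ := hh.trans d2
      have : κ * a ^ 2 ≤ κ * (R' / (2 * (1 + κ))) ^ 2 := by linarith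
      exact le_of_mul_le_mul_left this hκ
  have hb : ∀ h X a, h ≤ δ → phi κ g h X a ≠ 0 → |X - κ * a| ≤ R' ∧ |a| ≤ R' := by
    intro h X a hh hne
    obtain ⟨h1, h2⟩ := hX h X a hh hne
    rw [le_div_iff₀ (by positivity)] at h2
    have h3 := abs_nonneg a
    have h4 : |X - κ * a| ≤ |X| + κ * |a| := by
      have := abs_sub X (κ * a)
      rwa [abs_mul, abs_of_pos hκ] at this
    constructor <;> nlinarith
  set c' : (Σ n : ℕ, (Fin n → Fin 3)) → V →L[ℝ] V := fun n => if e n 0 = 0 then 0 else c n with hc'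
  set d : (Σ n : ℕ, (Fin n → Fin 3)) → ℝ := fun n => ‖c' n‖ * R ^ (e n 2) with hd
  have hd0 : ∀ n, 0 ≤ d n := fun n => by positivity
  have hdsum : Summable fun n => d n * R ^ (max 1 (e n 0) + e n 1) := by
    refine hsum.of_nonneg_of_le (fun n => mul_nonneg (hd0 n) (by positivity)) fun n => ?_
    by_cases h : e n 0 = 0
    · simp only [hd, hc', h, if_true, norm_zero, zero_mul]; positivity
    · simp only [hd, hc', h, if_false]
      rw [max_eq_right (Nat.one_le_iff_ne_zero.mpr h), mul_assoc, ← pow_add]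
      apply le_of_eq; ring_nf
  have h2 : ∀ j h, 0 ≤ h → h ≤ δ →
      ‖mom κ g 0 j h‖ ≤ ∑' n, d n * ‖mom κ g (max 1 (e n 0)) (e n 1 + j) h‖ := by
    intro j h hh hhδ
    refine mom_zero_bound hκ hgc hg M hM R h hR0.le
      (fun X a hne => ⟨(hb h X a hhδ hne).1.trans hR'R.le, (hb h X a hhδ hne).2.trans hR'R.le⟩)
      (fun n => h ^ (e n 2) • c' n) d (fun n => max 1 (e n 0)) (fun n => e n 1) ?_ hdsum
      (fun t a => U ![t, a, h]) ?_ (fun a => huc a h) ?_ j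
    · intro n
      rw [norm_smul, norm_pow, Real.norm_eq_abs, abs_of_nonneg hh, mul_comm]
      have : h ≤ R := hhδ.trans d4
      simp only [hd]
      gcongr
    · intro t a ht ha
      have hhR : |h| ≤ R := by rw [abs_of_nonneg hh]; exact hhδ.trans d4
      have e1 := hexp ![t, a, h] (by intro i; fin_cases i <;> simp [ht, ha, hhR])
      have e2 := hexp ![0, a, h] (by intro i; fin_cases i <;> simp [hR0.le, ha, hhR])
      rw [hU0] at e2
      have e3 := e1.sub e2
      refine e3.congr_fun fun n => ?_
      by_cases h0 : e n 0 = 0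
      · simp [hc', h0]
      · simp only [hc', h0, if_false]
        rw [max_eq_right (Nat.one_le_iff_ne_zero.mpr h0), smul_smul]
        simp [h0]
    · intro a ha
      rw [intervalIntegral.integral_eq_integral_of_support_subset, hu0 a h]
      intro X hXs
      have hne : phi κ g h X a ≠ 0 := by
        intro h0; apply hXs; simp [h0]
      have := (hX h X a hhδ hne).1
      have := abs_le.mp this
      constructor <;> linarith [this.1, this.2]
  obtain ⟨δ', hδ'0, hz⟩ := moments_vanish (fun i j h => mom κ g i j h) κ δ (4 * M) R' R hκ.le hδ0
    (by positivity) hR'0 hR'R d (fun n => max 1 (e n 0)) (fun n => e n 1) hd0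
    (fun n => le_max_left _ _) hdsum
    (fun i j h hh hhδ => mom_base hκ hg M hM R' h hR'0.le (fun X a => hb h X a hhδ) i j)
    (fun i j h hh hhδ => mom_rec hκ hgc hg i j h hh (by linarith))
    h2
  refine ⟨min (min 1 κ) (δ' / 1), by positivity, fun X Y hX hY => ?_⟩
  by_contra hne
  have hs := hg X Y hne
  have x1 : |X| < 1 := hX.trans_le ((min_le_left _ _).trans (min_le_left _ _))
  have x2 : |X| < κ := hX.trans_le ((min_le_left _ _).trans (min_le_right _ _))
  have y1 : |Y| < δ' := by simpa using hY.trans_le (min_le_right _ _)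
  have hphi : phi κ g (Y - X ^ 2 / (2 * κ)) X (X / κ) = g X Y := by
    unfold phi
    congr 1
    field_simp
    ring
  have hh0 : 0 ≤ Y - X ^ 2 / (2 * κ) := by
    rw [sub_nonneg, div_le_iff₀ (by positivity)]
    nlinarith [sq_nonneg X]
  have hh1 : Y - X ^ 2 / (2 * κ) ≤ δ' := by
    have : 0 ≤ X ^ 2 / (2 * κ) := by positivity
    have := le_abs_self Y
    linarith
  apply hne
  rw [← hphi]
  refine phi_zero_of_mom hgc _ (fun i j => hz _ hh0 hh1 i j) X (abs_le.mp x1.le) _ (abs_le.mp ?_)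
  rw [abs_div, abs_of_pos hκ, div_le_one hκ]
  exact x2.le
end XR
namespace XR
open scoped ContDiff

noncomputable def mv (N : ℕ) : Matrix (Fin N) (Fin N) ℂ →L[ℝ] ((Fin N → ℂ) →L[ℝ] (Fin N → ℂ)) :=
  LinearMap.toContinuousLinearMap
    { toFun := fun A => LinearMap.toContinuousLinearMap ((Matrix.mulVecLin A).restrictScalars ℝ)
      map_add' := fun A B => by ext x : 1; simp [Matrix.add_mulVec]
      map_smul' := fun c A => by ext x : 1; simp [Matrix.smul_mulVec] }

lemma mv_apply (N : ℕ) (A : Matrix (Fin N) (Fin N) ℂ) (x : Fin N → ℂ) : mv N A x = A *ᵥ x := rfl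

lemma mv_unit (N : ℕ) {A : Matrix (Fin N) (Fin N) ℂ} (hA : IsUnit A) : IsUnit (mv N A) := by
  obtain ⟨u, rfl⟩ := hA
  refine ⟨⟨mv N u, mv N (u⁻¹ : (Matrix (Fin N) (Fin N) ℂ)ˣ), ?_, ?_⟩, rfl⟩
  · ext x : 1
    simp only [ContinuousLinearMap.mul_apply, mv_apply, Matrix.mulVec_mulVec, Units.mul_inv,
      Matrix.one_mulVec]
    rfl
  · ext x : 1
    simp only [ContinuousLinearMap.mul_apply, mv_apply, Matrix.mulVec_mulVec, Units.inv_mul,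
      Matrix.one_mulVec]
    rfl

abbrev E2 := EuclideanSpace ℝ (Fin 2)

noncomputable def dir (e n : E2) (a : ℝ) : E2 := (Real.sqrt (1 + a ^ 2))⁻¹ • (n - a • e)
noncomputable def bas (κ : ℝ) (x0 e : E2) (a h : ℝ) : E2 := x0 - (h - κ * a ^ 2 / 2) • e
noncomputable def foot (κ : ℝ) (x0 e n : E2) (a h : ℝ) : E2 :=
  bas κ x0 e a h - ⟪bas κ x0 e a h, dir e n a⟫ • dir e n a
noncomputable def lin (κ : ℝ) (x0 e n : E2) (a h X : ℝ) : E2 := bas κ x0 e a h + X • (n - a • e)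

lemma norm_dir {e n : E2} (he : ‖e‖ = 1) (hn : ‖n‖ = 1) (hen : ⟪n, e⟫ = 0) (a : ℝ) :
    ‖dir e n a‖ = 1 := by
  have h1 : ‖n - a • e‖ ^ 2 = 1 + a ^ 2 := by
    rw [norm_sub_sq_real, inner_smul_right, hen, norm_smul, he, hn]
    simp
  have h2 : ‖n - a • e‖ = Real.sqrt (1 + a ^ 2) := by
    rw [← h1, Real.sqrt_sq (norm_nonneg _)]
  have h3 : 0 < Real.sqrt (1 + a ^ 2) := by positivity
  rw [dir, norm_smul, h2, norm_inv, Real.norm_eq_abs, abs_of_pos h3, inv_mul_cancel₀ h3.ne']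

lemma lin_eq (κ : ℝ) (x0 e n : E2) (a h X : ℝ) :
    lin κ x0 e n a h X = foot κ x0 e n a h +
      (Real.sqrt (1 + a ^ 2) * X + ⟪bas κ x0 e a h, dir e n a⟫) • dir e n a := by
  have h3 : 0 < Real.sqrt (1 + a ^ 2) := by positivity
  have h4 : n - a • e = Real.sqrt (1 + a ^ 2) • dir e n a := by
    rw [dir, smul_smul, mul_inv_cancel₀ h3.ne', one_smul]
  rw [lin, foot, h4]
  module

lemma int_aff {V : Type*} [NormedAddCommGroup V] [NormedSpace ℝ V] (F : ℝ → V) (s c : ℝ)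
    (hF : ∫ t, F t = 0) : ∫ X, F (s * X + c) = 0 := by
  rw [MeasureTheory.Measure.integral_comp_mul_left (fun x => F (x + c)) s,
    integral_add_right_eq_self F c, hF, smul_zero]

lemma foot_orth {e n : E2} (he : ‖e‖ = 1) (hn : ‖n‖ = 1) (hen : ⟪n, e⟫ = 0) (κ : ℝ) (x0 : E2)
    (a h : ℝ) : ⟪foot κ x0 e n a h, dir e n a⟫ = 0 := by
  rw [foot, inner_sub_left, inner_smul_left, real_inner_self_eq_norm_sq, norm_dir he hn hen]
  simp

section
variable {N : ℕ} (W : E2 × E2 × E2 → Matrix (Fin N) (Fin N) ℂ)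

noncomputable def ww (κ : ℝ) (x0 e n : E2) (z : Fin 3 → ℝ) : (Fin N → ℂ) →L[ℝ] (Fin N → ℂ) :=
  mv N (W (foot κ x0 e n (z 1) (z 2), dir e n (z 1), lin κ x0 e n (z 1) (z 2) (z 0 + κ * z 1)))

lemma ww_contDiff (hW : AnalyticOnNhd ℝ W Set.univ) (κ : ℝ) (x0 e n : E2) :
    ContDiff ℝ ω (ww W κ x0 e n) := by
  have hW' : ContDiff ℝ ω W := contDiff_iff_contDiffAt.mpr fun x => (hW x trivial).contDiffAt
  have hd : ContDiff ℝ ω fun z : Fin 3 → ℝ => dir e n (z 1) := by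
    unfold dir
    have h1 : ContDiff ℝ ω fun z : Fin 3 → ℝ => Real.sqrt (1 + (z 1) ^ 2) :=
      ContDiff.sqrt (by fun_prop) (fun z => by positivity)
    have h2 := h1.inv (fun z => by positivity)
    exact h2.smul (by fun_prop)
  have hb : ContDiff ℝ ω fun z : Fin 3 → ℝ => bas κ x0 e (z 1) (z 2) := by
    unfold bas
    fun_prop
  have hf : ContDiff ℝ ω fun z : Fin 3 → ℝ => foot κ x0 e n (z 1) (z 2) := by
    unfold foot
    exact hb.sub ((hb.inner ℝ hd).smul hd)
  have hl : ContDiff ℝ ω fun z : Fin 3 → ℝ => lin κ x0 e n (z 1) (z 2) (z 0 + κ * z 1) := by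
    unfold lin
    exact hb.add (by fun_prop)
  exact (mv N).contDiff.comp (hW'.comp (hf.prodMk (hd.prodMk hl)))

lemma ww_unit (hWinv : ∀ p v x : E2, ‖v‖ = 1 → IsUnit (W (p, v, x)))
    {e n : E2} (he : ‖e‖ = 1) (hn : ‖n‖ = 1) (hen : ⟪n, e⟫ = 0) (κ : ℝ) (x0 : E2) (z : Fin 3 → ℝ) :
    IsUnit (ww W κ x0 e n z) := mv_unit N (hWinv _ _ _ (norm_dir he hn hen _))

noncomputable def UU (κ : ℝ) (x0 e n : E2) (z : Fin 3 → ℝ) : (Fin N → ℂ) →L[ℝ] (Fin N → ℂ) :=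
  Ring.inverse (ww W κ x0 e n ![0, z 1, z 2]) * ww W κ x0 e n z

lemma UU_analytic (hW : AnalyticOnNhd ℝ W Set.univ)
    (hWinv : ∀ p v x : E2, ‖v‖ = 1 → IsUnit (W (p, v, x)))
    {e n : E2} (he : ‖e‖ = 1) (hn : ‖n‖ = 1) (hen : ⟪n, e⟫ = 0) (κ : ℝ) (x0 : E2) :
    AnalyticAt ℝ (UU W κ x0 e n) 0 := by
  have h1 : ContDiff ℝ ω (ww W κ x0 e n) := ww_contDiff W hW κ x0 e n
  have h2 : ContDiff ℝ ω fun z : Fin 3 → ℝ => ww W κ x0 e n ![0, z 1, z 2] := by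
    refine h1.comp (contDiff_pi.mpr fun i => ?_)
    fin_cases i
    · exact contDiff_const
    · exact contDiff_apply ℝ ℝ (1 : Fin 3)
    · exact contDiff_apply ℝ ℝ (2 : Fin 3)
  have h3 : AnalyticAt ℝ (fun z : Fin 3 → ℝ => ww W κ x0 e n ![0, z 1, z 2]) 0 :=
    h2.contDiffAt.analyticAt
  have h4 : AnalyticAt ℝ (ww W κ x0 e n) 0 := h1.contDiffAt.analyticAt
  unfold UU
  refine AnalyticAt.mul ?_ h4
  obtain ⟨u, hu⟩ := ww_unit W hWinv he hn hen κ x0 ![0, (0 : Fin 3 → ℝ) 1, (0 : Fin 3 → ℝ) 2]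
  have h5 := analyticAt_inverse (𝕜 := ℝ) u
  rw [hu] at h5
  exact AnalyticAt.fun_comp (g := Ring.inverse)
    (f := fun z : Fin 3 → ℝ => ww W κ x0 e n ![0, z 1, z 2]) h5 h3

lemma UU_one (hWinv : ∀ p v x : E2, ‖v‖ = 1 → IsUnit (W (p, v, x)))
    {e n : E2} (he : ‖e‖ = 1) (hn : ‖n‖ = 1) (hen : ⟪n, e⟫ = 0) (κ : ℝ) (x0 : E2) (a h : ℝ) :
    UU W κ x0 e n ![0, a, h] = 1 :=
  Ring.inverse_mul_cancel _ (ww_unit W hWinv he hn hen κ x0 ![0, a, h])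

lemma local_zero (hW : AnalyticOnNhd ℝ W Set.univ)
    (hWinv : ∀ p v x : E2, ‖v‖ = 1 → IsUnit (W (p, v, x)))
    {e n : E2} (he : ‖e‖ = 1) (hn : ‖n‖ = 1) (hen : ⟪n, e⟫ = 0)
    (f : E2 → (Fin N → ℂ)) (hf : Continuous f) (M : ℝ) (hM : ∀ x, ‖f x‖ ≤ M)
    (r : ℝ) (hr : 0 < r) (hsupp : ∀ x, f x ≠ 0 → ‖x‖ ≤ r)
    (hint : ∀ v : E2, ‖v‖ = 1 → ∀ p : E2, ⟪p, v⟫ = 0 →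
        (∫ t : ℝ, W (p, v, p + t • v) *ᵥ f (p + t • v)) = 0) :
    ∃ ε > 0, ∀ X Y : ℝ, |X| < ε → |Y| < ε → f (r • e + X • n - Y • e) = 0 := by
  set g : ℝ → ℝ → (Fin N → ℂ) := fun X Y => f (r • e + X • n - Y • e) with hgdef
  have hκ : 0 < 2 * r := by positivity
  have hgc : Continuous (Function.uncurry g) := by
    simp only [hgdef]
    unfold Function.uncurry
    exact hf.comp (by fun_prop)
  have hg : ∀ X Y, g X Y ≠ 0 → X ^ 2 ≤ 2 * r * Y := by
    intro X Y hne
    have h1 := hsupp _ hne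
    have h2 : ‖r • e + X • n - Y • e‖ ^ 2 = (r - Y) ^ 2 + X ^ 2 := by
      have : r • e + X • n - Y • e = (r - Y) • e + X • n := by module
      rw [this, norm_add_sq_real, inner_smul_left, inner_smul_right, real_inner_comm, hen,
        norm_smul, norm_smul, he, hn]
      simp
    have h3 : ‖r • e + X • n - Y • e‖ ^ 2 ≤ r ^ 2 := by gcongr
    nlinarith [sq_nonneg Y]
  have hphi : ∀ h X a, phi (2 * r) g h X a = f (lin (2 * r) (r • e) e n a h X) := by
    intro h X a
    simp only [phi, hgdef, lin, bas]
    congr 1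
    module
  have hwc := (ww_contDiff W hW (2 * r) (r • e) e n).continuous
  have hwX : ∀ a h : ℝ, Continuous fun X => ww W (2 * r) (r • e) e n ![X - 2 * r * a, a, h] := by
    intro a h
    refine hwc.comp (continuous_pi fun i => ?_)
    fin_cases i
    · change Continuous fun X : ℝ => X - 2 * r * a
      fun_prop
    · exact continuous_const
    · exact continuous_const
  have hphX : ∀ a h : ℝ, Continuous fun X => phi (2 * r) g h X a := fun a h =>
    phi_cont' (2 * r) hgc continuous_const continuous_id continuous_const
  have hwp : ∀ a h : ℝ, Continuous fun X =>
      ww W (2 * r) (r • e) e n ![X - 2 * r * a, a, h] (phi (2 * r) g h X a) := fun a h =>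
    (hwX a h).clm_apply (hphX a h)
  refine local_vanish hκ hgc hg M (fun X Y => hM _) (UU W (2 * r) (r • e) e n)
    (UU_analytic W hW hWinv he hn hen _ _) (UU_one W hWinv he hn hen _ _) ?_ ?_
  · intro a h
    exact (Ring.inverse (ww W (2 * r) (r • e) e n ![0, a, h])).continuous.comp (hwp a h)
  · intro a h
    have h0 : ∫ X : ℝ, ww W (2 * r) (r • e) e n ![X - 2 * r * a, a, h] (phi (2 * r) g h X a)
        = 0 := by
      have := int_aff _ (Real.sqrt (1 + a ^ 2))
        (⟪bas (2 * r) (r • e) e a h, dir e n a⟫) (hint (dir e n a) (norm_dir he hn hen a)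
        (foot (2 * r) (r • e) e n a h) (foot_orth he hn hen _ _ _ _))
      rw [← this]
      congr 1
      funext X
      rw [hphi, ww, mv_apply, ← lin_eq]
      simp
    have hI : Integrable fun X : ℝ =>
        ww W (2 * r) (r • e) e n ![X - 2 * r * a, a, h] (phi (2 * r) g h X a) := by
      refine (hwp a h).integrable_of_hasCompactSupport ?_
      refine HasCompactSupport.intro (isCompact_Icc (a := -Real.sqrt (2 * (2 * r) * h))
        (b := Real.sqrt (2 * (2 * r) * h))) fun X hX => ?_
      by_contra hne
      have hne' : phi (2 * r) g h X a ≠ 0 := by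
        intro h0; apply hne; rw [h0, map_zero]
      exact hX (abs_le.mp (Real.abs_le_sqrt (phi_supp hκ hg hne').1))
    have := (Ring.inverse (ww W (2 * r) (r • e) e n ![0, a, h])).integral_comp_comm hI
    rw [h0, map_zero] at this
    exact this
end
end XR
/-- Injectivity of the matrix-weighted X-ray transform on the closed unit disk in ℝ²
with a real-analytic `GL(N, ℂ)`-valued weight: if all weighted line integrals of a
continuous `ℂ^N`-valued function supported in the closed unit disk vanish, then the
function vanishes identically. -/
theorem matrix_weighted_xray_injective_disk
    (N : ℕ) (hN : 1 ≤ N)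
    (W : EuclideanSpace ℝ (Fin 2) × EuclideanSpace ℝ (Fin 2) × EuclideanSpace ℝ (Fin 2) →
      Matrix (Fin N) (Fin N) ℂ)
    (hWanalytic : AnalyticOnNhd ℝ W Set.univ)
    (hWinv : ∀ (p : EuclideanSpace ℝ (Fin 2)) (v : EuclideanSpace ℝ (Fin 2))
      (x : EuclideanSpace ℝ (Fin 2)), ‖v‖ = 1 → IsUnit (W (p, v, x)))
    (f : EuclideanSpace ℝ (Fin 2) → (Fin N → ℂ))
    (hf : Continuous f)
    (hsupp : Function.support f ⊆ Metric.closedBall (0 : EuclideanSpace ℝ (Fin 2)) 1)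
    (hint : ∀ v : EuclideanSpace ℝ (Fin 2), ‖v‖ = 1 →
      ∀ p : EuclideanSpace ℝ (Fin 2), ⟪p, v⟫ = 0 →
        (∫ t : ℝ, W (p, v, p + t • v) *ᵥ f (p + t • v)) = 0) :
    f = 0 := by
  by_contra hne0
  have hcs : HasCompactSupport f :=
    HasCompactSupport.of_support_subset_isCompact (isCompact_closedBall _ _) hsupp
  have hne : (tsupport f).Nonempty := by
    rw [Set.nonempty_iff_ne_empty, Ne, tsupport_eq_empty_iff]
    exact hne0
  obtain ⟨M, hM⟩ := hf.bounded_above_of_compact_support hcs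
  obtain ⟨x0, hx0, hmax⟩ := hcs.isCompact.exists_isMaxOn hne continuous_norm.continuousOn
  have hs : ∀ x, f x ≠ 0 → ‖x‖ ≤ ‖x0‖ := fun x hx => hmax (subset_tsupport f hx)
  rcases (norm_nonneg x0).eq_or_lt with hr | hr
  · apply hne0
    have hz : ∀ x, x ≠ 0 → f x = 0 := by
      intro x hx
      by_contra hfx
      have := hs x hfx
      rw [← hr] at this
      exact hx (norm_le_zero_iff.mp this)
    have hd : Dense ({0}ᶜ : Set (EuclideanSpace ℝ (Fin 2))) := dense_compl_singleton 0
    exact hf.ext_on hd continuous_const fun x hx => hz x hx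
  · set r := ‖x0‖ with hrdef
    set e : EuclideanSpace ℝ (Fin 2) := r⁻¹ • x0 with he
    set n : EuclideanSpace ℝ (Fin 2) := !₂[-(e 1), e 0] with hn
    have hre : r • e = x0 := by rw [he, smul_smul, mul_inv_cancel₀ hr.ne', one_smul]
    have he1 : ‖e‖ = 1 := by
      rw [he, norm_smul, norm_inv, Real.norm_eq_abs, abs_of_pos hr, inv_mul_cancel₀ hr.ne']
    have hsq : e 0 ^ 2 + e 1 ^ 2 = 1 := by
      have := EuclideanSpace.real_norm_sq_eq e
      rw [he1, Fin.sum_univ_two] at this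
      linarith
    have hn1 : ‖n‖ = 1 := by
      have := EuclideanSpace.real_norm_sq_eq n
      rw [Fin.sum_univ_two] at this
      simp only [hn] at this
      have h2 : ‖n‖ ^ 2 = 1 := by
        rw [hn, this]
        simp
        linarith
      nlinarith [norm_nonneg n]
    have hen : ⟪n, e⟫ = 0 := by
      rw [PiLp.inner_apply, Fin.sum_univ_two]
      simp [hn]
      ring
    obtain ⟨ε, hε, hz⟩ := XR.local_zero W hWanalytic hWinv he1 hn1 hen f hf M hM r hr hs hint
    refine (notMem_tsupport_iff_eventuallyEq.mpr ?_) hx0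
    filter_upwards [Metric.ball_mem_nhds x0 hε] with y hy
    rw [Metric.mem_ball, dist_eq_norm] at hy
    have h1 := hz ⟪n, y - x0⟫ (-⟪e, y - x0⟫)
      (lt_of_le_of_lt (by simpa [hn1] using abs_real_inner_le_norm n (y - x0)) hy)
      (lt_of_le_of_lt (by simpa [he1] using abs_real_inner_le_norm e (y - x0)) hy)
    have h2 : y = r • e + ⟪n, y - x0⟫ • n - (-⟪e, y - x0⟫) • e := by
      rw [hre]
      set d := y - x0 with hd
      have hy2 : y = x0 + d := by rw [hd]; abel
      rw [hy2]
      have i1 : ⟪n, d⟫ = -(e 1) * d 0 + e 0 * d 1 := by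
        rw [PiLp.inner_apply, Fin.sum_univ_two]
        simp [hn]
        ring
      have i2 : ⟪e, d⟫ = e 0 * d 0 + e 1 * d 1 := by
        rw [PiLp.inner_apply, Fin.sum_univ_two]
        simp
        ring
      rw [i1, i2]
      ext i
      fin_cases i
      · simp [hn]
        linear_combination (-(d 0)) * hsq
      · simp [hn]
        linear_combination (-(d 1)) * hsq
    rw [h2]
    exact h1
end
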